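/- For every integer m ≥ 2 and every real p > 1 there exists a constant C = C(p,m), independent of N, such that for every integer N ≥ 1 and every f : G → ℂ, the local spherical maximal function M^L f(x) = max over integers 0 ≤ k ≤ c_m·N of |(σ_k * f)(x)| satisfies ‖M^L f‖_{L^p(G)} ≤ C · ‖f‖_{L^p(G)}. -/

import Mathlib

open Finset

noncomputable section

/-- Hamming weight on `(ℤ/(m+1)ℤ)^N`. -/
def hw {m N : ℕ} (y : Fin N → ZMod (m + 1)) : ℕ :=
  (Finset.univ.filter fun i => y i ≠ 0).card

/-- `L¹`-normalized indicator of the sphere of radius `r` (zero if `r < 0` or `r > N`). -/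
def sigmaC (m N : ℕ) (r : ℤ) : (Fin N → ZMod (m + 1)) → ℂ := fun x =>
  if (hw x : ℤ) = r then
    ((Finset.univ.filter fun y : Fin N → ZMod (m + 1) => (hw y : ℤ) = r).card : ℂ)⁻¹
  else 0

/-- Convolution on `(ℤ/(m+1)ℤ)^N`. -/
def convC {m N : ℕ} (g f : (Fin N → ZMod (m + 1)) → ℂ) : (Fin N → ZMod (m + 1)) → ℂ :=
  fun x => ∑ y, g y * f (x - y)

/-- The local spherical maximal function `M^L f (x) = max_{0 ≤ k ≤ c_m N} |(σ_k * f)(x)|`.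
The integers `k` with `0 ≤ k ≤ c_m·N = m·N/(m+1)` are exactly those with
`k ≤ ⌊m·N/(m+1)⌋ = (m*N)/(m+1)` (natural division). -/
def localMax (m N : ℕ) (f : (Fin N → ZMod (m + 1)) → ℂ) (x : Fin N → ZMod (m + 1)) : ℝ :=
  (Finset.range ((m * N) / (m + 1) + 1)).sup' Finset.nonempty_range_add_one fun k =>
    ‖convC (sigmaC m N (k : ℤ)) f x‖

/-!
Write `A k` for the average of `f` over the sphere of radius `k`. Randomly permuting the coordinates
and then averaging over ever fewer of them is a martingale, and averaging over `j` random
coordinates is a `Binomial (j, m / (m + 1))` mixture of the `A k`. Doob's inequality thus controls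
the maximum over `j` of these mixtures, and hence, for `k ≤ m * N / (m + 1)`, the means of the
`|A i|` over windows of about `√k` radii near `k`.

The remaining fluctuation is an `M`-fold difference of `A` at scale `√k`. The multiplier of `A k` at
a character is an elementary symmetric mean of numbers `a` equal to `1` or `-1 / m`. As `m ≥ 2`,
these satisfy `|a - 1| / (m + 1) + |a| ≤ 1`, which makes the `M`-th difference `O (k ^ (-M))`. So
the fluctuation has `L²` norm `O (k ^ (-M / 2))`. Interpolation with the trivial `L¹` bound makes
its `p`-th powers summable in `k`, once `M` is large, for `1 < p < 2`. Larger `p` follow from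
Jensen's inequality.
-/

open scoped BigOperators

lemma rpow_expect_le_expect_rpow {ι : Type*} (s : Finset ι) {f : ι → ℝ} {p : ℝ} (hp : 1 ≤ p)
    (hf : ∀ i ∈ s, 0 ≤ f i) : (𝔼 i ∈ s, f i) ^ p ≤ 𝔼 i ∈ s, f i ^ p := by
  rcases s.eq_empty_or_nonempty with rfl | hs
  · simp [Real.zero_rpow (by positivity : p ≠ 0)]
  have hcard : ∑ _i ∈ s, (#s : ℝ)⁻¹ = 1 := by
    rw [sum_const, nsmul_eq_mul, mul_inv_cancel₀ (by exact_mod_cast hs.card_ne_zero)]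
  simpa only [expect_eq_sum_div_card, div_eq_inv_mul, mul_sum] using
    Real.rpow_arith_mean_le_arith_mean_rpow s (fun _ => (#s : ℝ)⁻¹) f
      (fun _ _ => by positivity) hcard hf hp

/-! ### Interpolation between `ℓ¹` and `ℓ²` -/

section Interpolation

open MeasureTheory Set

lemma integral_rpow_of_lt {s t : ℝ} (hs : -1 < s) (ht : 0 ≤ t) :
    IntegrableOn (fun l : ℝ => if l < t then l ^ s else 0) (Ioi 0) ∧
      ∫ l in Ioi (0 : ℝ), (if l < t then l ^ s else 0) = t ^ (s + 1) / (s + 1) := by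
  have h_ite : (fun l : ℝ => if l < t then l ^ s else 0) = (Iio t).indicator (· ^ s) := by
    ext l; simp [indicator]
  have h_int : IntegrableOn (fun l : ℝ => l ^ s) (Ioo 0 t) :=
    (intervalIntegrable_iff_integrableOn_Ioo_of_le ht).mp
      (intervalIntegral.intervalIntegrable_rpow' hs)
  rw [h_ite, integrableOn_indicator_iff measurableSet_Iio, inter_comm, Ioi_inter_Iio,
    setIntegral_indicator measurableSet_Iio, Ioi_inter_Iio, ← integral_Ioc_eq_integral_Ioo,
    ← intervalIntegral.integral_of_le ht, integral_rpow (Or.inl hs), Real.zero_rpow (by linarith),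
    sub_zero]
  exact ⟨h_int, rfl⟩

lemma integral_rpow_of_ge {s t : ℝ} (hs : s < -1) (ht : 0 < t) :
    IntegrableOn (fun l : ℝ => if t ≤ l then l ^ s else 0) (Ioi 0) ∧
      ∫ l in Ioi (0 : ℝ), (if t ≤ l then l ^ s else 0) = -t ^ (s + 1) / (s + 1) := by
  have h_ite : (fun l : ℝ => if t ≤ l then l ^ s else 0) = (Ici t).indicator (· ^ s) := by
    ext l; simp [indicator]
  have h_inter : Ioi (0 : ℝ) ∩ Ici t = Ici t :=
    inter_eq_right.mpr fun l hl => ht.trans_le hl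
  rw [h_ite, integrableOn_indicator_iff measurableSet_Ici, inter_comm, h_inter,
    setIntegral_indicator measurableSet_Ici, h_inter, integral_Ici_eq_integral_Ioi,
    integral_Ioi_rpow_of_lt hs ht, integrableOn_Ici_iff_integrableOn_Ioi]
  exact ⟨integrableOn_Ioi_rpow_of_lt hs ht, rfl⟩

lemma integral_mul_rpow_of_lt_mul {a D p : ℝ} (ha : 0 ≤ a) (hD : 0 ≤ D) (hp : 1 < p) :
    IntegrableOn (fun l : ℝ => a * if l < D * a then l ^ (p - 2) else 0) (Ioi 0) ∧
      ∫ l in Ioi (0 : ℝ), (a * if l < D * a then l ^ (p - 2) else 0) =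
        D ^ (p - 1) / (p - 1) * a ^ p := by
  obtain ⟨h_int, h_eq⟩ :=
    integral_rpow_of_lt (s := p - 2) (t := D * a) (by linarith) (by positivity)
  refine ⟨h_int.const_mul a, ?_⟩
  have h_pow : a ^ p = a * a ^ (p - 1) := by
    rw [← Real.rpow_one_add' ha (by linarith)]; ring_nf
  rw [integral_const_mul, h_eq, show p - 2 + 1 = p - 1 by ring, Real.mul_rpow hD ha, h_pow]
  ring

lemma integral_sq_mul_rpow_of_mul_le {a D p : ℝ} (ha : 0 ≤ a) (hD : 0 < D) (hp0 : 0 < p)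
    (hp : p < 2) :
    IntegrableOn (fun l : ℝ => a ^ 2 * if D * a ≤ l then l ^ (p - 3) else 0) (Ioi 0) ∧
      ∫ l in Ioi (0 : ℝ), (a ^ 2 * if D * a ≤ l then l ^ (p - 3) else 0) =
        D ^ (p - 2) / (2 - p) * a ^ p := by
  rcases ha.eq_or_lt with rfl | ha
  · simp [Real.zero_rpow hp0.ne']
  obtain ⟨h_int, h_eq⟩ :=
    integral_rpow_of_ge (s := p - 3) (t := D * a) (by linarith) (by positivity)
  refine ⟨h_int.const_mul _, ?_⟩
  have h_pow : a ^ p = a ^ 2 * a ^ (p - 2) := by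
    rw [← Real.rpow_natCast, ← Real.rpow_add ha]; norm_num
  rw [integral_const_mul, h_eq, show p - 3 + 1 = p - 2 by ring, Real.mul_rpow hD.le ha.le, h_pow,
    neg_div, ← div_neg, neg_sub]
  ring

lemma one_le_two_mul_div_add_of_lt_add {u v l : ℝ} (hu : 0 ≤ u) (hl : 0 < l)
    (h : l < u + v) : 1 ≤ 2 * u / l + 4 * v ^ 2 / l ^ 2 := by
  rcases le_total (l / 2) u with h_large | h_large
  · refine le_add_of_le_of_nonneg ?_ (by positivity)
    rw [le_div_iff₀ hl]; linarith
  · refine le_add_of_nonneg_of_le (by positivity) ?_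
    rw [le_div_iff₀ (by positivity)]; nlinarith

variable {X Y V W : Type*} [Fintype X] [Fintype Y] [SeminormedAddCommGroup V]
  [SeminormedAddCommGroup W] {A E : ℝ} {R : (X → V) → Y → W}

lemma card_level_le (hR : ∀ f g y, ‖R (f + g) y‖ ≤ ‖R f y‖ + ‖R g y‖)
    (h_one : ∀ f, ∑ y, ‖R f y‖ ≤ A * ∑ x, ‖f x‖)
    (h_two : ∀ f, ∑ y, ‖R f y‖ ^ 2 ≤ E * ∑ x, ‖f x‖ ^ 2) (f : X → V) (D : ℝ) {l : ℝ}
    (hl : 0 < l) :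
    (∑ y, if l < ‖R f y‖ then (1 : ℝ) else 0) ≤
      2 * A / l * (∑ x, if l < D * ‖f x‖ then ‖f x‖ else 0) +
        4 * E / l ^ 2 * ∑ x, if D * ‖f x‖ ≤ l then ‖f x‖ ^ 2 else 0 := by
  set g : X → V := fun x => if l < D * ‖f x‖ then f x else 0 with hg
  set h : X → V := fun x => if D * ‖f x‖ ≤ l then f x else 0 with hh
  have h_split : f = g + h := by
    ext x
    rcases lt_or_ge l (D * ‖f x‖) with hx | hx
    · simp [hg, hh, hx, hx.not_ge]
    · simp [hg, hh, hx, hx.not_gt]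
  have h_pointwise (y : Y) : (if l < ‖R f y‖ then (1 : ℝ) else 0) ≤
      2 / l * ‖R g y‖ + 4 / l ^ 2 * ‖R h y‖ ^ 2 := by
    split_ifs with hy
    · rw [h_split] at hy
      refine (one_le_two_mul_div_add_of_lt_add (norm_nonneg (R g y)) hl
        (hy.trans_le (hR g h y))).trans_eq (by ring)
    · positivity
  have hg_norm (x : X) : ‖g x‖ = if l < D * ‖f x‖ then ‖f x‖ else 0 := by
    simp only [hg]; split_ifs <;> simp
  have hh_norm (x : X) : ‖h x‖ ^ 2 = if D * ‖f x‖ ≤ l then ‖f x‖ ^ 2 else 0 := by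
    simp only [hh]; split_ifs <;> simp
  simp only [← hg_norm, ← hh_norm]
  calc (∑ y, if l < ‖R f y‖ then (1 : ℝ) else 0)
      ≤ 2 / l * (∑ y, ‖R g y‖) + 4 / l ^ 2 * ∑ y, ‖R h y‖ ^ 2 := by
        rw [mul_sum, mul_sum, ← sum_add_distrib]
        exact sum_le_sum fun y _ => h_pointwise y
    _ ≤ 2 / l * (A * ∑ x, ‖g x‖) + 4 / l ^ 2 * (E * ∑ x, ‖h x‖ ^ 2) := by
        gcongr
        exacts [h_one g, h_two h]
    _ = _ := by ring

lemma sum_level_rpow_le (hR : ∀ f g y, ‖R (f + g) y‖ ≤ ‖R f y‖ + ‖R g y‖)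
    (h_one : ∀ f, ∑ y, ‖R f y‖ ≤ A * ∑ x, ‖f x‖)
    (h_two : ∀ f, ∑ y, ‖R f y‖ ^ 2 ≤ E * ∑ x, ‖f x‖ ^ 2) (f : X → V) (D : ℝ) {l : ℝ}
    (hl : 0 < l) (p : ℝ) :
    (∑ y, if l < ‖R f y‖ then l ^ (p - 1) else 0) ≤
      2 * A * (∑ x, ‖f x‖ * if l < D * ‖f x‖ then l ^ (p - 2) else 0) +
        4 * E * ∑ x, ‖f x‖ ^ 2 * if D * ‖f x‖ ≤ l then l ^ (p - 3) else 0 := by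
  have h_sub_two : l ^ (p - 2) = l ^ (p - 1) / l := by
    rw [← Real.rpow_sub_one hl.ne']; ring_nf
  have h_sub_three : l ^ (p - 3) = l ^ (p - 1) / l ^ 2 := by
    rw [← Real.rpow_sub_natCast hl.ne']; norm_num [sub_sub]
  calc (∑ y, if l < ‖R f y‖ then l ^ (p - 1) else 0)
      = l ^ (p - 1) * ∑ y, if l < ‖R f y‖ then 1 else 0 := by
        simp only [mul_sum, mul_ite, mul_one, mul_zero]
    _ ≤ l ^ (p - 1) * _ := mul_le_mul_of_nonneg_left (card_level_le hR h_one h_two f D hl)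
        (Real.rpow_nonneg hl.le (p - 1))
    _ = _ := by
        simp only [h_sub_two, h_sub_three, mul_add, mul_sum]
        congr 1 <;> refine sum_congr rfl fun x _ => ?_ <;> split_ifs <;> ring

-- Integrating the level set bound against `l ^ (p - 1)`, with `f` cut at height `l / E`.
theorem sum_norm_rpow_le_of_l1_of_l2 {p : ℝ} (hp : 1 < p) (hp_two : p < 2) (hE : 0 < E)
    (hR : ∀ f g y, ‖R (f + g) y‖ ≤ ‖R f y‖ + ‖R g y‖)
    (h_one : ∀ f, ∑ y, ‖R f y‖ ≤ A * ∑ x, ‖f x‖)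
    (h_two : ∀ f, ∑ y, ‖R f y‖ ^ 2 ≤ E * ∑ x, ‖f x‖ ^ 2) (f : X → V) :
    ∑ y, ‖R f y‖ ^ p ≤
      (2 * A * p / (p - 1) + 4 * p / (2 - p)) * E ^ (p - 1) * ∑ x, ‖f x‖ ^ p := by
  have hlow (x : X) := integral_mul_rpow_of_lt_mul (norm_nonneg (f x)) hE.le hp
  have hhigh (x : X) :=
    integral_sq_mul_rpow_of_mul_le (norm_nonneg (f x)) hE (by linarith) hp_two
  have hlevel (y : Y) :=
    integral_rpow_of_lt (s := p - 1) (t := ‖R f y‖) (by linarith) (norm_nonneg _)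
  have hlow_int := (integrable_finsetSum univ fun x _ => (hlow x).1).const_mul (2 * A)
  have hhigh_int := (integrable_finsetSum univ fun x _ => (hhigh x).1).const_mul (4 * E)
  have h_mono := setIntegral_mono_on (integrable_finsetSum univ fun y _ => (hlevel y).1)
    (hlow_int.add hhigh_int) measurableSet_Ioi fun l hl =>
      sum_level_rpow_le hR h_one h_two f E hl p
  simp only [Pi.add_apply] at h_mono
  rw [integral_finsetSum _ fun y _ => (hlevel y).1, integral_add hlow_int hhigh_int,
    integral_const_mul, integral_const_mul, integral_finsetSum _ fun x _ => (hlow x).1,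
    integral_finsetSum _ fun x _ => (hhigh x).1] at h_mono
  simp only [(hlevel _).2, (hlow _).2, (hhigh _).2, ← mul_sum, ← sum_div, sub_add_cancel] at h_mono
  have hE_pow : E ^ (p - 1) = E * E ^ (p - 2) := by
    rw [← Real.rpow_one_add' hE.le (by linarith)]; ring_nf
  rw [div_le_iff₀ (by linarith)] at h_mono
  refine h_mono.trans_eq ?_
  rw [hE_pow]
  ring

end Interpolation

/-! ### Doob's maximal inequality for coset averages -/

section Doob

variable {G : Type*} [AddCommGroup G]

lemma partialSups_sub_of_mem {H : ℕ → AddSubgroup G} (hH : Antitone H) {g : ℕ → G → ℝ}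
    (hg : ∀ i, ∀ z ∈ H i, ∀ x, g i (x - z) = g i x) {n i : ℕ} (hni : n ≤ i) :
    ∀ z ∈ H i, ∀ x, partialSups g n (x - z) = partialSups g n x := by
  intro z hz x
  simp only [Pi.partialSups_apply, partialSups_eq_sup'_range]
  exact sup'_congr _ rfl fun j hj => hg j z (hH (by grind) hz) x

variable [Fintype G] {H : AddSubgroup G} {f : G → ℝ}

open Classical in
/-- The average of `f` over the coset `x + H`: the conditional expectation of `f` given the
partition of the finite group `G` into cosets of `H`. -/
def cosetAvg (H : AddSubgroup G) (f : G → ℝ) (x : G) : ℝ :=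
  𝔼 z with z ∈ H, f (x - z)

lemma cosetAvg_nonneg (hf : ∀ x, 0 ≤ f x) (x : G) : 0 ≤ cosetAvg H f x :=
  expect_nonneg fun _ _ => hf _

lemma partialSups_cosetAvg_nonneg (H : ℕ → AddSubgroup G) (hf : ∀ x, 0 ≤ f x) (n : ℕ) (x : G) :
    0 ≤ partialSups (fun i => cosetAvg (H i) f) n x :=
  (cosetAvg_nonneg hf x).trans (le_partialSups (fun i => cosetAvg (H i) f) n x)

lemma cosetAvg_sub_of_mem (f : G → ℝ) {z : G} (hz : z ∈ H) (x : G) :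
    cosetAvg H f (x - z) = cosetAvg H f x := by
  refine expect_equiv (Equiv.addLeft z) (fun y => ?_) fun y _ => ?_
  · simp [H.add_mem_cancel_left hz]
  · simp [sub_sub]

lemma sum_mul_cosetAvg {b : G → ℝ} (hb : ∀ z ∈ H, ∀ x, b (x - z) = b x) (f : G → ℝ) :
    ∑ x, b x * cosetAvg H f x = ∑ x, b x * f x := by
  have h_shift (z : G) (hz : z ∈ H) : ∑ x, b x * f (x - z) = ∑ x, b x * f x := by
    rw [← (Equiv.subRight z).sum_comp fun x => b x * f x]
    exact sum_congr rfl fun x _ => by rw [Equiv.subRight_apply, hb z hz]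
  classical
  simp only [cosetAvg, mul_expect]
  rw [← expect_sum_comm, expect_congr rfl fun z hz => h_shift z (mem_filter.mp hz).2]
  exact expect_const ⟨0, by simp⟩ _

lemma max_rpow_sub_rpow_le {p a g : ℝ} (hp : 1 < p) (ha : 0 ≤ a) (hg : 0 ≤ g) :
    max a g ^ p - a ^ p ≤ p / (p - 1) * ((max a g ^ (p - 1) - a ^ (p - 1)) * g) := by
  have hp_sub : 0 < p - 1 := by linarith
  rcases le_total g a with h | h
  · simp [max_eq_left h]
  have h_young := Real.young_inequality_of_nonneg hg (Real.rpow_nonneg ha (p - 1))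
    (Real.HolderConjugate.conjExponent hp)
  rw [← Real.rpow_mul ha, Real.conjExponent, mul_div_cancel₀ _ hp_sub.ne'] at h_young
  have h_pow : g ^ p = g ^ (p - 1) * g := by
    rw [← Real.rpow_add_one' hg (by linarith)]; ring_nf
  rw [max_eq_right h, sub_mul, ← h_pow]
  calc g ^ p - a ^ p
      = p / (p - 1) * (g ^ p - (g ^ p / p + a ^ p / (p / (p - 1)))) := by field_simp; ring
    _ ≤ p / (p - 1) * (g ^ p - a ^ (p - 1) * g) := by gcongr; linarith

lemma le_rpow_mul_of_le_mul_rpow {p X F q : ℝ} (hp : 1 < p) (hX : 0 ≤ X) (hF : 0 ≤ F)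
    (hq : 0 ≤ q) (h : X ≤ q * (F ^ (1 / p) * X ^ (1 - 1 / p))) : X ≤ q ^ p * F := by
  have hp_pos : 0 < p := by linarith
  rcases hX.eq_or_lt with rfl | hX_pos
  · positivity
  have h_root : X ^ (1 / p) ≤ q * F ^ (1 / p) := by
    refine le_of_mul_le_mul_right ?_ (Real.rpow_pos_of_pos hX_pos (1 - 1 / p))
    rwa [← Real.rpow_add hX_pos, add_sub_cancel, Real.rpow_one, mul_assoc]
  calc X = (X ^ (1 / p)) ^ p := by rw [one_div, Real.rpow_inv_rpow hX hp_pos.ne']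
    _ ≤ (q * F ^ (1 / p)) ^ p := by gcongr
    _ = q ^ p * F := by
      rw [Real.mul_rpow hq (by positivity), one_div, Real.rpow_inv_rpow hF hp_pos.ne']

lemma sum_partialSups_cosetAvg_rpow_le_sum_mul {H : ℕ → AddSubgroup G} (hH : Antitone H)
    (hf : ∀ x, 0 ≤ f x) {p : ℝ} (hp : 1 < p) (n : ℕ) :
    ∑ x, partialSups (fun i => cosetAvg (H i) f) n x ^ p ≤
      p / (p - 1) * ∑ x, partialSups (fun i => cosetAvg (H i) f) n x ^ (p - 1) * f x := by
  set S := partialSups fun i => cosetAvg (H i) f with hS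
  have hS_nonneg : ∀ n x, 0 ≤ S n x := partialSups_cosetAvg_nonneg H hf
  have hS_inv {n i : ℕ} (hni : n ≤ i) := partialSups_sub_of_mem hH
    (fun i _ hz => cosetAvg_sub_of_mem (H := H i) f hz) hni
  have hp_sub : 0 < p - 1 := by linarith
  have hp_one : 1 ≤ p / (p - 1) := by rw [one_le_div hp_sub]; linarith
  induction n with
  | zero =>
    have h_eq (x : G) : S 0 x ^ p = S 0 x ^ (p - 1) * S 0 x := by
      rw [← Real.rpow_add_one' (hS_nonneg 0 x) (by linarith)]; ring_nf
    have h_adj : ∑ x, S 0 x ^ (p - 1) * S 0 x = ∑ x, S 0 x ^ (p - 1) * f x :=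
      sum_mul_cosetAvg (H := H 0) (fun z hz x => by rw [hS_inv le_rfl z hz x]) f
    rw [sum_congr rfl fun x _ => h_eq x, h_adj]
    exact le_mul_of_one_le_left (sum_nonneg fun x _ =>
      mul_nonneg (Real.rpow_nonneg (hS_nonneg 0 x) _) (hf x)) hp_one
  | succ n ih =>
    have h_step : ∑ x, (S (n + 1) x ^ p - S n x ^ p) ≤
        p / (p - 1) * ∑ x, (S (n + 1) x ^ (p - 1) - S n x ^ (p - 1)) * f x := by
      rw [← sum_mul_cosetAvg (H := H (n + 1)), mul_sum]
      · refine sum_le_sum fun x _ => ?_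
        rw [hS, partialSups_add_one]
        exact max_rpow_sub_rpow_le hp (hS_nonneg n x) (cosetAvg_nonneg hf x)
      · intro z hz x
        rw [hS_inv le_rfl z hz x, hS_inv n.le_succ z hz x]
    simp only [sub_mul, sum_sub_distrib, mul_sub] at h_step
    linarith

theorem sum_partialSups_cosetAvg_rpow_le {H : ℕ → AddSubgroup G} (hH : Antitone H)
    (hf : ∀ x, 0 ≤ f x) {p : ℝ} (hp : 1 < p) (n : ℕ) :
    ∑ x, partialSups (fun i => cosetAvg (H i) f) n x ^ p ≤ (p / (p - 1)) ^ p * ∑ x, f x ^ p := by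
  set S := partialSups (fun i => cosetAvg (H i) f) n
  have hS_nonneg : ∀ x, 0 ≤ S x := partialSups_cosetAvg_nonneg H hf n
  have hp_sub : 0 < p - 1 := by linarith
  refine le_rpow_mul_of_le_mul_rpow hp (sum_nonneg fun x _ => Real.rpow_nonneg (hS_nonneg x) _)
    (sum_nonneg fun x _ => Real.rpow_nonneg (hf x) _) (by positivity)
    ((sum_partialSups_cosetAvg_rpow_le_sum_mul hH hf hp n).trans ?_)
  gcongr
  have hpq := Real.HolderConjugate.conjExponent hp
  have h_holder := Real.inner_le_Lp_mul_Lq_of_nonneg univ hpq (fun x _ => hf x)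
    fun x _ => Real.rpow_nonneg (hS_nonneg x) (p - 1)
  have h_exp (x : G) : (S x ^ (p - 1)) ^ p.conjExponent = S x ^ p := by
    rw [← Real.rpow_mul (hS_nonneg x), Real.conjExponent, mul_div_cancel₀ _ hp_sub.ne']
  have h_conj : 1 / p.conjExponent = 1 - 1 / p := by
    simpa [one_div] using eq_sub_of_add_eq' hpq.inv_add_inv_eq_one
  simpa only [h_exp, h_conj, mul_comm (f _)] using h_holder

end Doob

/-! ### Window differences -/

section WindowDiff

variable {𝕜 : Type*} [RCLike 𝕜]

/-- The difference between a sequence at `n + 2 * w` and its average over the window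
`[n, n + w)`. Its powers are the smoothing remainders of the sequence. -/
def windowDiff (𝕜 : Type*) [RCLike 𝕜] (w : ℕ) : Module.End 𝕜 (ℕ → 𝕜) where
  toFun φ n := φ (n + 2 * w) - 𝔼 j ∈ range w, φ (n + j)
  map_add' φ ψ := by
    ext n; simp only [Pi.add_apply, expect_add_distrib]; abel
  map_smul' c φ := by
    ext n; simp only [Pi.smul_apply, smul_eq_mul, RingHom.id_apply, mul_sub, mul_expect]

lemma windowDiff_apply (w : ℕ) (φ : ℕ → 𝕜) (n : ℕ) :
    windowDiff 𝕜 w φ n = φ (n + 2 * w) - 𝔼 j ∈ range w, φ (n + j) := rfl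

lemma windowDiff_pow_succ_apply (w M : ℕ) (φ : ℕ → 𝕜) (n : ℕ) :
    (windowDiff 𝕜 w ^ (M + 1)) φ n = (windowDiff 𝕜 w ^ M) φ (n + 2 * w) -
      𝔼 j ∈ range w, (windowDiff 𝕜 w ^ M) φ (n + j) := by
  rw [pow_succ', Module.End.mul_apply, windowDiff_apply]

lemma norm_sub_windowDiff_pow_le {w M n : ℕ} (hw : 0 < w) {φ : ℕ → 𝕜} {B : ℝ}
    (hB : ∀ s, s + 2 * w ≤ 2 * M * w → 𝔼 j ∈ range w, ‖φ (n + s + j)‖ ≤ B) :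
    ‖φ (n + 2 * M * w) - (windowDiff 𝕜 w ^ M) φ n‖ ≤ (2 ^ M - 1) * B := by
  have h_range : (range w).Nonempty := nonempty_range_iff.mpr hw.ne'
  induction M generalizing n with
  | zero => simp
  | succ M ih =>
    set ψ := (windowDiff 𝕜 w ^ M) φ with hψ
    have h_two : 2 * (M + 1) * w = 2 * M * w + 2 * w := by ring
    have h_close (i : ℕ) (hi : i ≤ 2 * w) :
        ‖φ (n + i + 2 * M * w) - ψ (n + i)‖ ≤ (2 ^ M - 1) * B :=
      ih fun s hs => by simpa only [add_assoc] using hB (i + s) (by lia)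
    have h_avg : 𝔼 j ∈ range w, ‖ψ (n + j)‖ ≤ B + (2 ^ M - 1) * B := calc
      _ ≤ 𝔼 j ∈ range w, (‖φ (n + 2 * M * w + j)‖ + (2 ^ M - 1) * B) := by
        refine expect_le_expect fun j hj => ?_
        have h_tri := norm_le_norm_add_norm_sub (φ (n + j + 2 * M * w)) (ψ (n + j))
        rw [add_right_comm n _ j]
        linarith [h_close j (by have := mem_range.mp hj; lia)]
      _ ≤ B + (2 ^ M - 1) * B := by
        rw [expect_add_distrib, expect_const h_range]
        gcongr
        exact hB _ (by lia)
    calc _ = ‖(φ (n + 2 * w + 2 * M * w) - ψ (n + 2 * w)) + 𝔼 j ∈ range w, ψ (n + j)‖ := by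
          rw [windowDiff_pow_succ_apply, h_two, ← hψ, ← add_assoc, add_right_comm n]
          congr 1; abel
      _ ≤ (2 ^ M - 1) * B + (B + (2 ^ M - 1) * B) := (norm_add_le _ _).trans
          (add_le_add (h_close _ le_rfl) ((RCLike.norm_expect_le (K := ℝ)).trans h_avg))
      _ = (2 ^ (M + 1) - 1) * B := by ring

lemma sum_norm_windowDiff_pow_le {X : Type*} [Fintype X] {φ : X → ℕ → 𝕜} {B : ℝ}
    (hφ : ∀ n, ∑ x, ‖φ x n‖ ≤ B) {w : ℕ} (hw : 0 < w) (M n : ℕ) :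
    ∑ x, ‖(windowDiff 𝕜 w ^ M) (φ x) n‖ ≤ 2 ^ M * B := by
  induction M generalizing n with
  | zero => simpa using hφ n
  | succ M ih =>
    set ψ := fun x => (windowDiff 𝕜 w ^ M) (φ x)
    calc ∑ x, ‖(windowDiff 𝕜 w ^ (M + 1)) (φ x) n‖
        ≤ ∑ x, (‖ψ x (n + 2 * w)‖ + 𝔼 j ∈ range w, ‖ψ x (n + j)‖) := by
          refine sum_le_sum fun x _ => ?_
          rw [windowDiff_pow_succ_apply]
          exact (norm_sub_le _ _).trans (by gcongr; exact RCLike.norm_expect_le (K := ℝ))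
      _ = ∑ x, ‖ψ x (n + 2 * w)‖ + 𝔼 j ∈ range w, ∑ x, ‖ψ x (n + j)‖ := by
          rw [sum_add_distrib, expect_sum_comm]
      _ ≤ 2 ^ M * B + 2 ^ M * B := by
          gcongr
          · exact ih _
          · exact expect_le (nonempty_range_iff.mpr hw.ne') fun j _ => ih _
      _ = 2 ^ (M + 1) * B := by ring

lemma fwdDiff_windowDiff (w : ℕ) (φ : ℕ → 𝕜) :
    fwdDiff 1 (windowDiff 𝕜 w φ) = windowDiff 𝕜 w (fwdDiff 1 φ) := by
  ext n
  simp only [fwdDiff, windowDiff_apply, expect_sub_distrib, add_right_comm _ _ 1]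
  abel

lemma fwdDiff_iterate_windowDiff (w M : ℕ) (φ : ℕ → 𝕜) :
    (fwdDiff 1)^[M] (windowDiff 𝕜 w φ) = windowDiff 𝕜 w ((fwdDiff 1)^[M] φ) :=
  Function.Commute.iterate_left (fwdDiff_windowDiff w) M φ

lemma norm_sub_le_of_norm_fwdDiff_le {φ : ℕ → 𝕜} {D : ℝ} {a b : ℕ} (hab : a ≤ b)
    (hD : ∀ i, a ≤ i → i < b → ‖fwdDiff 1 φ i‖ ≤ D) : ‖φ b - φ a‖ ≤ (b - a : ℝ) * D := by
  rw [← sum_Ico_sub φ hab]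
  refine (norm_sum_le_of_le _ fun i hi => hD i (mem_Ico.mp hi).1 (mem_Ico.mp hi).2).trans_eq ?_
  rw [sum_const, Nat.card_Ico, nsmul_eq_mul, Nat.cast_sub hab]

lemma norm_windowDiff_le {w n : ℕ} (hw : 0 < w) {φ : ℕ → 𝕜} {D : ℝ}
    (hD : ∀ i ≤ 2 * w, ‖fwdDiff 1 φ (n + i)‖ ≤ D) : ‖windowDiff 𝕜 w φ n‖ ≤ 2 * w * D := by
  have h_range : (range w).Nonempty := nonempty_range_iff.mpr hw.ne'
  have hD_nonneg : 0 ≤ D := (norm_nonneg _).trans (hD 0 (by lia))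
  have h_eq : windowDiff 𝕜 w φ n = 𝔼 j ∈ range w, (φ (n + 2 * w) - φ (n + j)) := by
    rw [windowDiff_apply, expect_sub_distrib, expect_const h_range]
  rw [h_eq]
  refine (RCLike.norm_expect_le (K := ℝ)).trans (expect_le h_range fun j hj => ?_)
  have hj := mem_range.mp hj
  refine (norm_sub_le_of_norm_fwdDiff_le (D := D) (by lia) fun i hi hi' => ?_).trans ?_
  · simpa only [Nat.add_sub_cancel' (show n ≤ i by lia)] using hD (i - n) (by lia)
  · gcongr
    push_cast
    linarith

lemma norm_windowDiff_pow_le {w M n : ℕ} (hw : 0 < w) {φ : ℕ → 𝕜} {D : ℝ}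
    (hD : ∀ i ≤ 2 * M * w, ‖(fwdDiff 1)^[M] φ (n + i)‖ ≤ D) :
    ‖(windowDiff 𝕜 w ^ M) φ n‖ ≤ (2 * w) ^ M * D := by
  induction M generalizing φ D with
  | zero => simpa using hD 0 (by lia)
  | succ M ih =>
    rw [pow_succ, Module.End.mul_apply, pow_succ, mul_assoc]
    refine ih fun i hi => ?_
    rw [fwdDiff_iterate_windowDiff]
    refine norm_windowDiff_le hw fun u hu => ?_
    rw [← Function.iterate_succ_apply' (fwdDiff 1), add_assoc]
    exact hD _ (by nlinarith)

end WindowDiff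

/-! ### Normalized elementary symmetric means -/

section SymmetricMeans

lemma exists_perm_map_eq {ι : Type*} [Finite ι] {I S : Finset ι} (h : #I = #S) :
    ∃ ρ : Equiv.Perm ι, I.map ρ.toEmbedding = S := by
  classical
  have := Fintype.ofFinite ι
  let e : {x // x ∈ I} ≃ {x // x ∈ S} := equivOfCardEq h
  refine ⟨e.extendSubtype, eq_of_subset_of_card_le (fun x hx => ?_) (by rw [card_map, h])⟩
  obtain ⟨i, hi, rfl⟩ := mem_map.mp hx
  exact e.extendSubtype_mem i hi

variable {ι : Type*} [DecidableEq ι]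

lemma sum_powersetCard_prod_mul_prod_le_one {u v : ι → ℝ} (hu : ∀ i, 0 ≤ u i) (hv : ∀ i, 0 ≤ v i)
    (huv : ∀ i, u i + v i ≤ 1) (T : Finset ι) (M : ℕ) :
    ∑ J ∈ powersetCard M T, (∏ j ∈ J, u j) * ∏ i ∈ T \ J, v i ≤ 1 := calc
  _ ≤ ∑ J ∈ T.powerset, (∏ j ∈ J, u j) * ∏ i ∈ T \ J, v i :=
    sum_le_sum_of_subset_of_nonneg
      (fun _ hJ => mem_powerset.mpr (mem_powersetCard.mp hJ).1)
      fun _ _ _ => mul_nonneg (prod_nonneg fun j _ => hu j) (prod_nonneg fun i _ => hv i)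
  _ = ∏ i ∈ T, (u i + v i) := (prod_add _ _ _).symm
  _ ≤ 1 := prod_le_one (fun i _ => add_nonneg (hu i) (hv i)) fun i _ => huv i

variable [Fintype ι]

lemma expect_perm_map {V : Type*} [AddCommMonoid V] [Module ℚ≥0 V] (I : Finset ι)
    (F : Finset ι → V) :
    𝔼 π : Equiv.Perm ι, F (I.map π.toEmbedding) = 𝔼 S ∈ powersetCard #I univ, F S := by
  have h_transitive (S : Finset ι) (hS : S ∈ powersetCard #I univ) :
      𝔼 π : Equiv.Perm ι, F (S.map π.toEmbedding) =
        𝔼 π : Equiv.Perm ι, F (I.map π.toEmbedding) := by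
    obtain ⟨ρ, rfl⟩ := exists_perm_map_eq (mem_powersetCard.mp hS).2.symm
    exact Fintype.expect_equiv (Equiv.mulRight ρ) _ _ fun π => by rw [map_map]; rfl
  have h_invariant (π : Equiv.Perm ι) :
      𝔼 S ∈ powersetCard #I univ, F (S.map π.toEmbedding) = 𝔼 S ∈ powersetCard #I univ, F S :=
    expect_equiv π.finsetCongr (fun S => by simp [mem_powersetCard]) fun S _ => rfl
  rw [← Fintype.expect_const (ι := Equiv.Perm ι) (𝔼 S ∈ powersetCard #I univ, F S),
    ← expect_congr rfl fun π _ => h_invariant π, expect_comm, expect_congr rfl h_transitive,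
    expect_const (powersetCard_nonempty.mpr (card_le_univ I))]

variable {𝕜 : Type*} [RCLike 𝕜]

/-- The `k`-th elementary symmetric mean of `a`: the elementary symmetric polynomial divided by its
number of terms. It is `0` if `k` exceeds the number of variables. -/
def esymmMean (a : ι → 𝕜) (k : ℕ) : 𝕜 :=
  𝔼 S ∈ powersetCard k univ, ∏ i ∈ S, a i

/-- The average of `∏ i ∈ I, a i * ∏ j ∈ J, (a j - 1)` over all relabellings of the variables.
For disjoint `I` and `J` it is the forward difference of order `#J` of the elementary symmetric
means at `#I`. -/
def permMean (a : ι → 𝕜) (I J : Finset ι) : 𝕜 :=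
  𝔼 π : Equiv.Perm ι, (∏ i ∈ I, a (π i)) * ∏ j ∈ J, (a (π j) - 1)

lemma permMean_empty (a : ι → 𝕜) (I : Finset ι) : permMean a I ∅ = esymmMean a #I := by
  rw [esymmMean, ← expect_perm_map]
  simp [permMean]

lemma permMean_insert (a : ι → 𝕜) {I J : Finset ι} {j : ι} (hI : j ∉ I) (hJ : j ∉ J) :
    permMean a I (insert j J) = permMean a (insert j I) J - permMean a I J := by
  simp only [permMean, ← expect_sub_distrib, prod_insert hI, prod_insert hJ]
  exact expect_congr rfl fun π _ => by ring

lemma fwdDiff_iterate_esymmMean (a : ι → 𝕜) {I J : Finset ι} (hIJ : Disjoint I J) :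
    (fwdDiff 1)^[#J] (esymmMean a) #I = permMean a I J := by
  induction J using Finset.induction_on generalizing I with
  | empty => exact (permMean_empty a I).symm
  | insert j J hj ih =>
    obtain ⟨hjI, hIJ⟩ := disjoint_insert_right.mp hIJ
    rw [card_insert_of_notMem hj, Function.iterate_succ_apply', fwdDiff,
      ← card_insert_of_notMem hjI, ih (disjoint_insert_left.mpr ⟨hj, hIJ⟩), ih hIJ,
      permMean_insert a hjI hj]

end SymmetricMeans

-- The difference is the average of `permMean a (T \ J) J` over all `J ⊆ T` of cardinality `M`,
-- and for each permutation the corresponding terms are part of the expansion of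
-- `∏ i ∈ T, (c * ‖a i - 1‖ + ‖a i‖)`.
lemma choose_mul_norm_fwdDiff_esymmMean_le {ι 𝕜 : Type*} [Fintype ι] [RCLike 𝕜] {a : ι → 𝕜}
    {c : ℝ} (hc : 0 ≤ c) (ha : ∀ i, c * ‖a i - 1‖ + ‖a i‖ ≤ 1) {k M : ℕ}
    (hkM : k + M ≤ Fintype.card ι) :
    c ^ M * (k + M).choose M * ‖(fwdDiff 1)^[M] (esymmMean a) k‖ ≤ 1 := by
  classical
  obtain ⟨T, -, hT⟩ := exists_subset_card_eq (s := (univ : Finset ι)) hkM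
  have h_diff (J : Finset ι) (hJ : J ∈ powersetCard M T) :
      (fwdDiff 1)^[M] (esymmMean a) k = permMean a (T \ J) J := by
    obtain ⟨hJT, hJM⟩ := mem_powersetCard.mp hJ
    rw [← fwdDiff_iterate_esymmMean a sdiff_disjoint, card_sdiff_of_subset hJT, hT, hJM,
      Nat.add_sub_cancel]
  have h_norm (J : Finset ι) (hJ : J ∈ powersetCard M T) :
      c ^ M * ‖permMean a (T \ J) J‖ ≤
        𝔼 π : Equiv.Perm ι, (∏ j ∈ J, c * ‖a (π j) - 1‖) * ∏ i ∈ T \ J, ‖a (π i)‖ := by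
    refine (mul_le_mul_of_nonneg_left (RCLike.norm_expect_le (K := ℝ)) (by positivity)).trans_eq ?_
    rw [mul_expect]
    refine expect_congr rfl fun π _ => ?_
    rw [norm_mul, norm_prod, norm_prod, prod_mul_distrib, prod_const, (mem_powersetCard.mp hJ).2]
    ring
  calc c ^ M * (k + M).choose M * ‖(fwdDiff 1)^[M] (esymmMean a) k‖
      = ∑ J ∈ powersetCard M T, c ^ M * ‖permMean a (T \ J) J‖ := by
        rw [sum_congr rfl fun J hJ => by rw [← h_diff J hJ], sum_const, card_powersetCard, hT,
          nsmul_eq_mul]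
        ring
    _ ≤ 𝔼 π : Equiv.Perm ι, ∑ J ∈ powersetCard M T,
          (∏ j ∈ J, c * ‖a (π j) - 1‖) * ∏ i ∈ T \ J, ‖a (π i)‖ := by
        rw [expect_sum_comm]
        exact sum_le_sum h_norm
    _ ≤ 1 := expect_le univ_nonempty fun π _ =>
        sum_powersetCard_prod_mul_prod_le_one (fun i => by positivity) (fun i => norm_nonneg _)
          (fun i => ha (π i)) T M

/-! ### Fourier analysis on finite abelian groups -/

section Fourier

variable {G : Type*} [AddCommGroup G] [Fintype G]

lemma sum_norm_sq_sum_mul_addChar (u : G → ℂ) :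
    ∑ ψ : AddChar G ℂ, ‖∑ x, u x * ψ x‖ ^ 2 = Fintype.card G * ∑ x, ‖u x‖ ^ 2 := by
  classical
  have h_expand (ψ : AddChar G ℂ) : ((‖∑ x, u x * ψ x‖ ^ 2 : ℝ) : ℂ) =
      ∑ x, ∑ y, u x * starRingEnd ℂ (u y) * ψ (x - y) := by
    push_cast
    rw [← Complex.mul_conj', map_sum, sum_mul_sum]
    refine sum_congr rfl fun x _ => sum_congr rfl fun y _ => ?_
    rw [map_mul, sub_eq_add_neg, AddChar.map_add_eq_mul, AddChar.map_neg_eq_conj]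
    ring
  apply Complex.ofReal_injective
  rw [Complex.ofReal_sum, sum_congr rfl fun ψ _ => h_expand ψ, sum_comm]
  push_cast
  rw [mul_sum]
  refine sum_congr rfl fun x _ => ?_
  rw [sum_comm]
  simp only [← mul_sum, AddChar.sum_apply_eq_ite, sub_eq_zero, mul_ite, mul_zero, sum_ite_eq,
    mem_univ, if_true, Complex.mul_conj']
  ring

lemma sum_norm_sq_le_of_norm_sum_mul_addChar_le {u v : G → ℂ} {B : ℝ}
    (h : ∀ ψ : AddChar G ℂ, ‖∑ x, u x * ψ x‖ ≤ B * ‖∑ x, v x * ψ x‖) :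
    ∑ x, ‖u x‖ ^ 2 ≤ B ^ 2 * ∑ x, ‖v x‖ ^ 2 := by
  have h_card : (0 : ℝ) < Fintype.card G := by exact_mod_cast Fintype.card_pos
  refine le_of_mul_le_mul_left ?_ h_card
  rw [mul_left_comm, ← sum_norm_sq_sum_mul_addChar, ← sum_norm_sq_sum_mul_addChar, mul_sum]
  refine sum_le_sum fun ψ _ => ?_
  rw [← mul_pow]
  exact pow_le_pow_left₀ (norm_nonneg _) (h ψ) 2

lemma sum_expect_translate_mul_addChar (s : Finset G) (f : G → ℂ) (ψ : AddChar G ℂ) :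
    ∑ x, (𝔼 y ∈ s, f (x - y)) * ψ x = (𝔼 y ∈ s, ψ y) * ∑ x, f x * ψ x := by
  simp only [expect_mul]
  rw [← expect_sum_comm]
  refine expect_congr rfl fun y _ => ?_
  rw [← Equiv.sum_comp (Equiv.addRight y), mul_sum]
  refine sum_congr rfl fun x _ => ?_
  rw [Equiv.coe_addRight, add_sub_cancel_right, AddChar.map_add_eq_mul]
  ring

lemma sum_expect_translate_le (s : Finset G) {f : G → ℝ} (hf : ∀ x, 0 ≤ f x) :
    ∑ x, 𝔼 y ∈ s, f (x - y) ≤ ∑ x, f x := by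
  have h_translate (y : G) : ∑ x, f (x - y) = ∑ x, f x := Equiv.sum_comp (Equiv.subRight y) f
  rw [← expect_sum_comm, expect_congr rfl fun y _ => h_translate y]
  rcases s.eq_empty_or_nonempty with rfl | hs
  · simpa using sum_nonneg fun x _ => hf x
  · rw [expect_const hs]

end Fourier

/-! ### Averages over Hamming spheres -/

section Spheres

variable {m N : ℕ}

/-- The Hamming sphere of radius `k` about the origin, as a finite set. -/
def sphere (m N k : ℕ) : Finset (Fin N → ZMod (m + 1)) :=
  {y | hw y = k}

/-- The average of `f` over the Hamming sphere of radius `k` about `x`. -/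
def sphereAvg {𝕜 : Type*} [RCLike 𝕜] (f : (Fin N → ZMod (m + 1)) → 𝕜) (x : Fin N → ZMod (m + 1))
    (k : ℕ) : 𝕜 :=
  𝔼 y ∈ sphere m N k, f (x - y)

lemma sum_sphere_prod {R : Type*} [CommSemiring R] {h : Fin N → ZMod (m + 1) → R}
    (h_zero : ∀ i, h i 0 = 1) (k : ℕ) :
    ∑ y ∈ sphere m N k, ∏ i, h i (y i) =
      ∑ S ∈ powersetCard k univ, ∏ i ∈ S, ∑ c with c ≠ 0, h i c := by
  have h_support (y) (hy : y ∈ sphere m N k) : ({i | y i ≠ 0} : Finset _) ∈ powersetCard k univ :=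
    mem_powersetCard.mpr ⟨subset_univ _, (mem_filter.mp hy).2⟩
  rw [← sum_fiberwise_of_maps_to h_support]
  refine sum_congr rfl fun S hS => ?_
  have h_extend : ∏ i ∈ S, ∑ c with c ≠ 0, h i c =
      ∏ i, ∑ c ∈ if i ∈ S then ({c | c ≠ 0} : Finset _) else {0}, h i c := by
    rw [← prod_subset (subset_univ S) fun i _ hi => by rw [if_neg hi, sum_singleton, h_zero]]
    exact prod_congr rfl fun i hi => by rw [if_pos hi]
  rw [h_extend, prod_univ_sum]
  refine sum_congr ?_ fun _ _ => rfl
  ext y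
  have h_mem_ite (i : Fin N) : y i ∈ (if i ∈ S then ({c | c ≠ 0} : Finset _) else {0}) ↔
      (y i ≠ 0 ↔ i ∈ S) := by
    by_cases hi : i ∈ S <;> simp [hi]
  simp only [Fintype.mem_piFinset, h_mem_ite, mem_filter, sphere, mem_univ, true_and]
  constructor
  · rintro ⟨-, rfl⟩
    simp
  · intro hy
    have h_eq : ({i | y i ≠ 0} : Finset _) = S := by
      ext i
      simpa using hy i
    exact ⟨(congrArg card h_eq).trans (mem_powersetCard.mp hS).2, h_eq⟩

lemma card_filter_ne_zero_zmod (m : ℕ) : #{c : ZMod (m + 1) | c ≠ 0} = m := by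
  rw [filter_ne', card_erase_of_mem (mem_univ _), card_univ, ZMod.card, Nat.add_sub_cancel]

lemma card_sphere (m N k : ℕ) : #(sphere m N k) = N.choose k * m ^ k := by
  have h := sum_sphere_prod (R := ℕ) (m := m) (N := N) (h := fun _ _ => 1) (fun _ => rfl) k
  have h_const (S : Finset (Fin N)) (hS : S ∈ powersetCard k univ) :
      ∏ _i ∈ S, #{c : ZMod (m + 1) | c ≠ 0} = m ^ k := by
    rw [prod_const, (mem_powersetCard.mp hS).2, card_filter_ne_zero_zmod]
  simpa [sum_congr rfl h_const, -ne_eq, -prod_const] using h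

lemma convC_sigmaC (f : (Fin N → ZMod (m + 1)) → ℂ) (x : Fin N → ZMod (m + 1)) (k : ℕ) :
    convC (sigmaC m N k) f x = sphereAvg f x k := by
  simp only [convC, sigmaC, Nat.cast_inj, ite_mul, zero_mul, ← sum_filter, ← mul_sum, sphereAvg,
    sphere, expect_eq_sum_div_card, div_eq_inv_mul]

variable {𝕜 : Type*} [RCLike 𝕜]

lemma sphereAvg_nonneg {f : (Fin N → ZMod (m + 1)) → ℝ} (hf : ∀ x, 0 ≤ f x)
    (x : Fin N → ZMod (m + 1)) (k : ℕ) : 0 ≤ sphereAvg f x k :=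
  expect_nonneg fun y _ => hf (x - y)

lemma norm_sphereAvg_le (f : (Fin N → ZMod (m + 1)) → 𝕜) (x : Fin N → ZMod (m + 1)) (k : ℕ) :
    ‖sphereAvg f x k‖ ≤ sphereAvg (fun y => ‖f y‖) x k :=
  RCLike.norm_expect_le (K := ℝ)

lemma norm_sphereAvg_rpow_le (f : (Fin N → ZMod (m + 1)) → 𝕜) (x : Fin N → ZMod (m + 1)) (k : ℕ)
    {p : ℝ} (hp : 1 ≤ p) : ‖sphereAvg f x k‖ ^ p ≤ sphereAvg (fun y => ‖f y‖ ^ p) x k :=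
  (Real.rpow_le_rpow (norm_nonneg _) (norm_sphereAvg_le f x k) (by positivity)).trans
    (rpow_expect_le_expect_rpow _ hp fun _ _ => norm_nonneg _)

lemma sum_norm_sphereAvg_rpow_le (f : (Fin N → ZMod (m + 1)) → 𝕜) (k : ℕ) {p : ℝ} (hp : 1 ≤ p) :
    ∑ x, ‖sphereAvg f x k‖ ^ p ≤ ∑ x, ‖f x‖ ^ p :=
  (sum_le_sum fun x _ => norm_sphereAvg_rpow_le f x k hp).trans
    (sum_expect_translate_le (sphere m N k) fun x => Real.rpow_nonneg (norm_nonneg (f x)) p)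

/-- The mean of the character `ψ` over the nonzero elements of the `i`-th coordinate subgroup. -/
def coordMean (ψ : AddChar (Fin N → ZMod (m + 1)) ℂ) (i : Fin N) : ℂ :=
  𝔼 c with c ≠ 0, ψ (Pi.single i c)

lemma addChar_eq_prod_single (ψ : AddChar (Fin N → ZMod (m + 1)) ℂ) (y : Fin N → ZMod (m + 1)) :
    ψ y = ∏ i, ψ (Pi.single i (y i)) := by
  conv_lhs => rw [← univ_sum_single y]
  exact map_prod ψ.toMonoidHom _ _

lemma expect_sphere_addChar (ψ : AddChar (Fin N → ZMod (m + 1)) ℂ) (k : ℕ) :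
    𝔼 y ∈ sphere m N k, ψ y = esymmMean (coordMean ψ) k := by
  have h_sum := sum_sphere_prod (h := fun i c => ψ (Pi.single i c)) (fun i => by simp) k
  have h_prod (S : Finset (Fin N)) (hS : S ∈ powersetCard k univ) : ∏ i ∈ S, coordMean ψ i =
      (∏ i ∈ S, ∑ c with c ≠ 0, ψ (Pi.single i c)) / (m : ℂ) ^ k := by
    simp only [coordMean, expect_eq_sum_div_card, card_filter_ne_zero_zmod, prod_div_distrib,
      prod_const, (mem_powersetCard.mp hS).2]
  simp only [← addChar_eq_prod_single] at h_sum
  rw [esymmMean, expect_congr rfl h_prod, ← expect_div, expect_eq_sum_div_card,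
    expect_eq_sum_div_card, h_sum, card_sphere, card_powersetCard, card_univ, Fintype.card_fin,
    Nat.cast_mul, Nat.cast_pow, div_div]

lemma coordMean_eq_one_or (hm : m ≠ 0) (ψ : AddChar (Fin N → ZMod (m + 1)) ℂ) (i : Fin N) :
    coordMean ψ i = 1 ∨ coordMean ψ i = -1 / m := by
  have h_erase : ∑ c with c ≠ 0, ψ (Pi.single i c) = (∑ c, ψ (Pi.single i c)) - 1 := by
    rw [filter_ne', ← sum_erase_add univ _ (mem_univ (0 : ZMod (m + 1))), Pi.single_zero,
      AddChar.map_zero_eq_one, add_sub_cancel_right]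
  have h_sum := AddChar.sum_eq_ite
    (ψ.compAddMonoidHom (AddMonoidHom.single (fun _ : Fin N => ZMod (m + 1)) i))
  simp only [AddChar.compAddMonoidHom_apply, AddMonoidHom.single_apply, ZMod.card] at h_sum
  rw [coordMean, expect_eq_sum_div_card, card_filter_ne_zero_zmod, h_erase, h_sum]
  split_ifs
  · left
    rw [Nat.cast_add_one, add_sub_cancel_right, div_self (Nat.cast_ne_zero.mpr hm)]
  · right
    rw [zero_sub]

lemma norm_coordMean_sub_one_add_le (hm : 2 ≤ m) (ψ : AddChar (Fin N → ZMod (m + 1)) ℂ)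
    (i : Fin N) : (m + 1 : ℝ)⁻¹ * ‖coordMean ψ i - 1‖ + ‖coordMean ψ i‖ ≤ 1 := by
  have hm_two : (2 : ℝ) ≤ m := by exact_mod_cast hm
  rcases coordMean_eq_one_or (by lia) ψ i with h | h
  · simp [h]
  · have h_sub : (-1 / m - 1 : ℂ) = ((-((m + 1) / m) : ℝ) : ℂ) := by
      have : (m : ℂ) ≠ 0 := by norm_cast; lia
      push_cast
      field_simp
      ring
    have h_self : (-1 / m : ℂ) = ((-(1 / m) : ℝ) : ℂ) := by
      push_cast
      ring
    rw [h, h_sub, h_self, Complex.norm_real, Complex.norm_real, norm_neg, norm_neg,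
      Real.norm_of_nonneg (by positivity), Real.norm_of_nonneg (by positivity)]
    field_simp
    linarith

lemma norm_fwdDiff_expect_sphere_addChar_le (hm : 2 ≤ m) (ψ : AddChar (Fin N → ZMod (m + 1)) ℂ)
    {k M : ℕ} (hk : 0 < k) (hkM : k + M ≤ N) :
    ‖(fwdDiff 1)^[M] (fun l => 𝔼 y ∈ sphere m N l, ψ y) k‖ ≤ M.factorial * ((m + 1) / k) ^ M := by
  have h_bound := choose_mul_norm_fwdDiff_esymmMean_le (k := k) (M := M) (by positivity)
    (norm_coordMean_sub_one_add_le hm ψ) (by rwa [Fintype.card_fin])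
  have h_choose : (k : ℝ) ^ M / M.factorial ≤ (k + M).choose M := by
    refine le_trans ?_ (Nat.pow_le_choose (α := ℝ) M (k + M))
    gcongr
    lia
  have h_le : (m + 1 : ℝ)⁻¹ ^ M * (k ^ M / M.factorial) *
      ‖(fwdDiff 1)^[M] (esymmMean (coordMean ψ)) k‖ ≤ 1 := h_bound.trans' (by gcongr)
  rw [funext (expect_sphere_addChar ψ)]
  rw [← le_div_iff₀' (by positivity)] at h_le
  refine h_le.trans_eq ?_
  rw [div_pow, inv_pow]
  field_simp

end Spheres

/-! ### Binomial weights -/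

section BinomialWeights

variable {θ : ℝ}

/-- The probability that `j` independent trials with success probability `θ` have exactly `l`
successes. -/
def binomialWeight (θ : ℝ) (j l : ℕ) : ℝ :=
  (bernsteinPolynomial ℝ j l).eval θ

lemma binomialWeight_eq (θ : ℝ) (j l : ℕ) :
    binomialWeight θ j l = j.choose l * θ ^ l * (1 - θ) ^ (j - l) := by
  simp [binomialWeight, bernsteinPolynomial]

lemma binomialWeight_nonneg (hθ : θ ∈ Set.Icc 0 1) (j l : ℕ) : 0 ≤ binomialWeight θ j l := by
  have := hθ.1
  have := sub_nonneg.mpr hθ.2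
  rw [binomialWeight_eq]
  positivity

lemma binomialWeight_eq_zero_of_lt (θ : ℝ) {j l : ℕ} (h : j < l) : binomialWeight θ j l = 0 := by
  rw [binomialWeight, bernsteinPolynomial.eq_zero_of_lt ℝ h, Polynomial.eval_zero]

lemma sum_range_binomialWeight (θ : ℝ) {j n : ℕ} (h : j < n) :
    ∑ l ∈ range n, binomialWeight θ j l = 1 := by
  rw [← sum_subset (range_mono h) fun l _ hl => binomialWeight_eq_zero_of_lt θ (by simpa using hl)]
  simp only [binomialWeight, Nat.succ_eq_add_one]
  rw [← Polynomial.eval_finsetSum, bernsteinPolynomial.sum, Polynomial.eval_one]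

lemma binomialWeight_succ_zero (θ : ℝ) (j : ℕ) :
    binomialWeight θ (j + 1) 0 = (1 - θ) * binomialWeight θ j 0 := by
  simp only [binomialWeight_eq, Nat.choose_zero_right, pow_zero, Nat.sub_zero, pow_succ]
  ring

lemma binomialWeight_succ_succ (θ : ℝ) (j l : ℕ) :
    binomialWeight θ (j + 1) (l + 1) =
      θ * binomialWeight θ j l + (1 - θ) * binomialWeight θ j (l + 1) := by
  simp only [binomialWeight_eq, Nat.choose_succ_succ', Nat.cast_add, Nat.add_sub_add_right]
  rcases lt_or_ge l j with h | h
  · rw [show j - l = j - (l + 1) + 1 by lia]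
    ring
  · rw [Nat.choose_eq_zero_of_lt (by lia : j < l + 1)]
    ring

lemma sum_range_binomialWeight_sub_succ (θ : ℝ) (j l : ℕ) :
    ∑ i ∈ range (l + 1), binomialWeight θ j i - ∑ i ∈ range (l + 1), binomialWeight θ (j + 1) i =
      θ * binomialWeight θ j l := by
  induction l with
  | zero =>
    rw [sum_range_one, sum_range_one, binomialWeight_succ_zero]
    ring
  | succ l ih =>
    rw [sum_range_succ, sum_range_succ _ (l + 1), binomialWeight_succ_succ]
    linear_combination ih

lemma sum_range_binomialWeight_sub (θ : ℝ) {a b : ℕ} (hab : a ≤ b) (l : ℕ) :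
    ∑ i ∈ range (l + 1), binomialWeight θ a i - ∑ i ∈ range (l + 1), binomialWeight θ b i =
      θ * ∑ j ∈ Ico a b, binomialWeight θ j l := by
  rw [mul_sum, ← sum_congr rfl fun j _ => sum_range_binomialWeight_sub_succ θ j l,
    ← neg_inj, neg_sub, ← sum_neg_distrib]
  simp only [neg_sub]
  exact (sum_Ico_sub (fun j => ∑ i ∈ range (l + 1), binomialWeight θ j i) hab).symm

lemma sum_sq_mul_binomialWeight_le (θ : ℝ) (j : ℕ) :
    ∑ l ∈ range (j + 1), (j * θ - l) ^ 2 * binomialWeight θ j l ≤ j / 4 := by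
  have h := congrArg (Polynomial.eval θ) (bernsteinPolynomial.variance ℝ j)
  simp only [Polynomial.eval_finsetSum, Polynomial.eval_mul, Polynomial.eval_pow,
    Polynomial.eval_sub, Polynomial.eval_one, Polynomial.eval_X, Polynomial.eval_natCast,
    nsmul_eq_mul] at h
  simp only [binomialWeight]
  rw [h]
  nlinarith [mul_nonneg (Nat.cast_nonneg (α := ℝ) j) (sq_nonneg (θ - 1 / 2))]

lemma sq_mul_sum_binomialWeight_le (hθ : θ ∈ Set.Icc 0 1) {j : ℕ} {s : Finset ℕ} {w : ℝ}
    (hw : 0 ≤ w) (hs : ∀ l ∈ s, w ≤ |j * θ - l|) :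
    w ^ 2 * ∑ l ∈ s, binomialWeight θ j l ≤ j / 4 := by
  have h_term (l : ℕ) : 0 ≤ (j * θ - l) ^ 2 * binomialWeight θ j l :=
    mul_nonneg (sq_nonneg _) (binomialWeight_nonneg hθ j l)
  calc w ^ 2 * ∑ l ∈ s, binomialWeight θ j l
      ≤ ∑ l ∈ s, (j * θ - l) ^ 2 * binomialWeight θ j l := by
        rw [mul_sum]
        refine sum_le_sum fun l hl => ?_
        rw [← sq_abs (j * θ - l)]
        exact mul_le_mul_of_nonneg_right (pow_le_pow_left₀ hw (hs l hl) 2)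
          (binomialWeight_nonneg hθ j l)
    _ = ∑ l ∈ s with l ∈ range (j + 1), (j * θ - l) ^ 2 * binomialWeight θ j l := by
        rw [sum_filter_of_ne]
        intro l _ hl
        contrapose! hl
        rw [binomialWeight_eq_zero_of_lt θ (by simpa using hl), mul_zero]
    _ ≤ ∑ l ∈ range (j + 1), (j * θ - l) ^ 2 * binomialWeight θ j l :=
        sum_le_sum_of_subset_of_nonneg (fun l hl => (mem_filter.mp hl).2) fun l _ _ => h_term l
    _ ≤ j / 4 := sum_sq_mul_binomialWeight_le θ j

-- Between `a` and `b` trials the chance of at most `l` successes falls from `≥ 3/4` to `≤ 1/4`.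
lemma half_le_mul_sum_Ico_binomialWeight (hθ : θ ∈ Set.Icc 0 1) {a b l : ℕ} {w : ℝ} (hw : 0 < w)
    (ha : a * θ + w ≤ l) (hb : l + w ≤ b * θ) (haw : a ≤ w ^ 2) (hbw : b ≤ w ^ 2) :
    1 / 2 ≤ θ * ∑ j ∈ Ico a b, binomialWeight θ j l := by
  have hab : a ≤ b := by
    have h_lt : (a : ℝ) * θ < b * θ := by linarith
    exact_mod_cast (lt_of_mul_lt_mul_right h_lt hθ.1).le
  have quarter {j : ℕ} {s : Finset ℕ} (hj : (j : ℝ) ≤ w ^ 2) (hs : ∀ i ∈ s, w ≤ |j * θ - i|) :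
      ∑ i ∈ s, binomialWeight θ j i ≤ 1 / 4 := by
    have h := sq_mul_sum_binomialWeight_le hθ hw.le hs
    refine le_of_mul_le_mul_left (h.trans ?_) (pow_pos hw 2)
    linarith
  have h_below : ∑ i ∈ range (l + 1), binomialWeight θ b i ≤ 1 / 4 := by
    refine quarter hbw fun i hi => le_abs.mpr (Or.inl ?_)
    have : (i : ℝ) ≤ l := by exact_mod_cast Nat.lt_succ_iff.mp (mem_range.mp hi)
    linarith
  have h_above : ∑ i ∈ Ico (l + 1) (l + a + 1), binomialWeight θ a i ≤ 1 / 4 := by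
    refine quarter haw fun i hi => le_abs.mpr (Or.inr ?_)
    have : (l : ℝ) ≤ i := by exact_mod_cast (Nat.le_succ l).trans (mem_Ico.mp hi).1
    linarith
  have h_total : ∑ i ∈ range (l + 1), binomialWeight θ a i +
      ∑ i ∈ Ico (l + 1) (l + a + 1), binomialWeight θ a i = 1 := by
    rw [sum_range_add_sum_Ico _ (by lia), sum_range_binomialWeight θ (by lia)]
  rw [← sum_range_binomialWeight_sub θ hab l]
  linarith

lemma exists_Ico_half_le_sum_binomialWeight (hθ_half : 1 / 2 ≤ θ) (hθ_one : θ ≤ 1) {u w N : ℕ}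
    (hw : 0 < w) (hwu : w ≤ u) (hu : 2 * (u + 2 * w) ≤ w ^ 2) (huN : u + 2 * w ≤ θ * N) :
    ∃ a b : ℕ, b ≤ N ∧ b ≤ a + 8 * w ∧
      ∀ i < w, 1 / 2 ≤ ∑ j ∈ Ico a b, binomialWeight θ j (u + i) := by
  have hθ : θ ∈ Set.Icc 0 1 := ⟨by linarith, hθ_one⟩
  have hθ_pos : 0 < θ := by linarith
  have hw_one : (1 : ℝ) ≤ w := by exact_mod_cast hw
  have hwu' : (w : ℝ) ≤ u := by exact_mod_cast hwu
  have hu' : 2 * ((u : ℝ) + 2 * w) ≤ w ^ 2 := by exact_mod_cast hu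
  have h_div_le {x : ℝ} (hx : 0 ≤ x) : x / θ ≤ 2 * x := by
    rw [div_le_iff₀ hθ_pos]
    nlinarith
  set a := ⌊((u : ℝ) - w) / θ⌋₊
  set b := ⌈((u : ℝ) + 2 * w) / θ⌉₊
  have ha_le : a * θ ≤ u - w := by
    rw [← le_div_iff₀ hθ_pos]
    exact Nat.floor_le (div_nonneg (by linarith) hθ_pos.le)
  have hb_ge : (u : ℝ) + 2 * w ≤ b * θ := by
    rw [← div_le_iff₀ hθ_pos]
    exact Nat.le_ceil _
  have hbw : b ≤ w ^ 2 := Nat.ceil_le.mpr (by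
    push_cast
    exact (h_div_le (by positivity)).trans hu')
  have h_length : (b : ℝ) ≤ a + 8 * w := by
    have h_ceil : (b : ℝ) < (u + 2 * w) / θ + 1 := Nat.ceil_lt_add_one (by positivity)
    have h_floor : ((u : ℝ) - w) / θ < a + 1 := Nat.lt_floor_add_one _
    have h_gap : ((u : ℝ) + 2 * w) / θ = (u - w) / θ + 3 * w / θ := by ring
    have := h_div_le (x := 3 * w) (by positivity)
    linarith
  have hab : (a : ℝ) ≤ b := le_of_mul_le_mul_right (by linarith) hθ_pos
  have hbw' : (b : ℝ) ≤ w ^ 2 := by exact_mod_cast hbw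
  refine ⟨a, b, Nat.ceil_le.mpr (by rwa [div_le_iff₀' hθ_pos]), by exact_mod_cast h_length,
    fun i hi => ?_⟩
  have hi' : (i : ℝ) + 1 ≤ w := by exact_mod_cast hi
  have hi_nonneg : (0 : ℝ) ≤ i := Nat.cast_nonneg i
  calc (1 : ℝ) / 2 ≤ θ * ∑ j ∈ Ico a b, binomialWeight θ j (u + i) :=
        half_le_mul_sum_Ico_binomialWeight hθ (by linarith : (0 : ℝ) < w) (by push_cast; linarith)
          (by push_cast; linarith) (hab.trans hbw') hbw'
    _ ≤ ∑ j ∈ Ico a b, binomialWeight θ j (u + i) :=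
        mul_le_of_le_one_left (sum_nonneg fun j _ => binomialWeight_nonneg hθ j _) hθ_one

lemma expect_window_le_of_sum_binomialWeight_le (hθ_half : 1 / 2 ≤ θ) (hθ_one : θ ≤ 1)
    {u w N : ℕ} (hw : 0 < w) (hwu : w ≤ u) (hu : 2 * (u + 2 * w) ≤ w ^ 2)
    (huN : u + 2 * w ≤ θ * N) {s : ℕ → ℝ} (hs : ∀ l, 0 ≤ s l) {W : ℝ}
    (hW : ∀ j ≤ N, ∑ l ∈ range (N + 1), binomialWeight θ j l * s l ≤ W) :
    𝔼 i ∈ range w, s (u + i) ≤ 16 * W := by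
  obtain ⟨a, b, hbN, hb, h_half⟩ :=
    exists_Ico_half_le_sum_binomialWeight hθ_half hθ_one hw hwu hu huN
  have hθ : θ ∈ Set.Icc 0 1 := ⟨by linarith, hθ_one⟩
  have hw' : (0 : ℝ) < w := by exact_mod_cast hw
  have huN' : u + 2 * w ≤ N := by
    have : ((u + 2 * w : ℕ) : ℝ) ≤ N := by
      push_cast
      exact huN.trans (mul_le_of_le_one_left N.cast_nonneg hθ_one)
    exact_mod_cast this
  have h_term (j l : ℕ) : 0 ≤ binomialWeight θ j l * s l :=
    mul_nonneg (binomialWeight_nonneg hθ j l) (hs l)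
  have hW_nonneg : 0 ≤ W := (sum_nonneg fun l _ => h_term 0 l).trans (hW 0 N.zero_le)
  have h_window (j : ℕ) (hj : j ∈ Ico a b) :
      ∑ i ∈ range w, binomialWeight θ j (u + i) * s (u + i) ≤ W := by
    refine le_trans ?_ (hW j ((mem_Ico.mp hj).2.le.trans hbN))
    rw [range_eq_Ico, sum_Ico_add (fun l => binomialWeight θ j l * s l)]
    refine sum_le_sum_of_subset_of_nonneg (fun l hl => ?_) fun l _ _ => h_term j l
    simp only [mem_Ico, mem_range] at hl ⊢
    lia
  have h_sum : 1 / 2 * ∑ i ∈ range w, s (u + i) ≤ 8 * w * W := calc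
    _ ≤ ∑ i ∈ range w, ∑ j ∈ Ico a b, binomialWeight θ j (u + i) * s (u + i) := by
      rw [mul_sum]
      refine sum_le_sum fun i hi => ?_
      rw [← sum_mul]
      exact mul_le_mul_of_nonneg_right (h_half i (mem_range.mp hi)) (hs _)
    _ ≤ ∑ _j ∈ Ico a b, W := by
      rw [sum_comm]
      exact sum_le_sum h_window
    _ ≤ 8 * w * W := by
      rw [sum_const, Nat.card_Ico, nsmul_eq_mul]
      have : ((b - a : ℕ) : ℝ) ≤ 8 * w := by exact_mod_cast (by lia : b - a ≤ 8 * w)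
      gcongr
  rw [expect_eq_sum_div_card, card_range, div_le_iff₀ hw']
  linarith

end BinomialWeights

/-! ### Resampling random coordinates -/

section Resampling

variable {m N : ℕ}

lemma expect_perm_ite_map_subset {ι : Type*} [Fintype ι] [DecidableEq ι] (L T : Finset ι) :
    𝔼 π : Equiv.Perm ι, (if L.map π.toEmbedding ⊆ T then 1 else 0 : ℝ) =
      (#T).choose #L / (Fintype.card ι).choose #L := by
  have h_filter : {S ∈ powersetCard #L (univ : Finset ι) | S ⊆ T} = powersetCard #L T := by
    ext S
    simp only [mem_filter, mem_powersetCard, subset_univ, true_and, and_comm]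
  rw [expect_perm_map L fun S => (if S ⊆ T then 1 else 0 : ℝ), expect_eq_sum_div_card, sum_boole,
    h_filter, card_powersetCard, card_powersetCard, card_univ]

/-- The subgroup of vectors supported on the `j` coordinates that `π` moves to the first `j`
positions. -/
def resampleSubgroup (m : ℕ) (π : Equiv.Perm (Fin N)) (j : ℕ) :
    AddSubgroup (Fin N → ZMod (m + 1)) :=
  AddSubgroup.pi {t | j ≤ (π t).val} fun _ => ⊥

lemma mem_resampleSubgroup {π : Equiv.Perm (Fin N)} {j : ℕ} {y : Fin N → ZMod (m + 1)} :
    y ∈ resampleSubgroup m π j ↔ ∀ t, j ≤ (π t).val → y t = 0 := by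
  simp [resampleSubgroup, AddSubgroup.mem_pi]

lemma mem_resampleSubgroup_iff_map_subset {π : Equiv.Perm (Fin N)} {j : ℕ}
    {y : Fin N → ZMod (m + 1)} :
    y ∈ resampleSubgroup m π j ↔
      ({t | y t ≠ 0} : Finset (Fin N)).map π.toEmbedding ⊆
        ({t | t.val < j} : Finset (Fin N)) := by
  simp only [mem_resampleSubgroup, subset_iff, forall_mem_map, mem_filter_univ,
    Equiv.coe_toEmbedding, ← not_le, not_imp_not, ne_eq]

lemma resampleSubgroup_mono (m : ℕ) (π : Equiv.Perm (Fin N)) : Monotone (resampleSubgroup m π) :=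
  fun _ _ hij _ hy => mem_resampleSubgroup.mpr fun t ht =>
    mem_resampleSubgroup.mp hy t (hij.trans ht)

open Classical in
lemma card_filter_mem_resampleSubgroup (m : ℕ) (π : Equiv.Perm (Fin N)) {j : ℕ} (hj : j ≤ N) :
    #{y | y ∈ resampleSubgroup m π j} = (m + 1) ^ j := by
  have h_pi : ({y | y ∈ resampleSubgroup m π j} : Finset _) =
      Fintype.piFinset fun t => if (π t).val < j then univ else {0} := by
    ext y
    simp only [mem_filter, mem_univ, true_and, mem_resampleSubgroup, Fintype.mem_piFinset]
    refine forall_congr' fun t => ?_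
    by_cases h : (π t).val < j <;> simp [h, not_le.mpr, not_lt.mp]
  rw [h_pi, Fintype.card_piFinset, Equiv.prod_comp π fun s : Fin N =>
    #(if s.val < j then univ else {0} : Finset (ZMod (m + 1)))]
  simp only [apply_ite card, card_univ, ZMod.card, card_singleton, prod_ite, prod_const, one_pow,
    mul_one, Fin.card_filter_val_lt, min_eq_right hj]

lemma expect_cosetAvg_resampleSubgroup (f : (Fin N → ZMod (m + 1)) → ℝ)
    (x : Fin N → ZMod (m + 1)) {j : ℕ} (hj : j ≤ N) :
    𝔼 π : Equiv.Perm (Fin N), cosetAvg (resampleSubgroup m π j) f x =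
      ∑ y, j.choose (hw y) / N.choose (hw y) / (m + 1) ^ j * f (x - y) := by
  classical
  have h_coset (π : Equiv.Perm (Fin N)) : cosetAvg (resampleSubgroup m π j) f x =
      ∑ y, (if ({t | y t ≠ 0} : Finset (Fin N)).map π.toEmbedding ⊆
        ({t | t.val < j} : Finset (Fin N)) then 1 else 0 : ℝ) * (f (x - y) / (m + 1) ^ j) := by
    rw [cosetAvg, expect_eq_sum_div_card, card_filter_mem_resampleSubgroup m π hj, sum_filter,
      sum_div]
    refine sum_congr rfl fun y _ => ?_
    simp only [mem_resampleSubgroup_iff_map_subset, ite_mul, one_mul, zero_mul, ite_div, zero_div,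
      Nat.cast_pow, Nat.cast_add, Nat.cast_one]
  rw [expect_congr rfl fun π _ => h_coset π, expect_sum_comm]
  refine sum_congr rfl fun y _ => ?_
  rw [← expect_mul, expect_perm_ite_map_subset, Fin.card_filter_val_lt, min_eq_right hj,
    Fintype.card_fin, hw]
  ring

lemma binomialWeight_div_add_one (m j l : ℕ) :
    binomialWeight (m / (m + 1)) j l = j.choose l * m ^ l / (m + 1) ^ j := by
  rcases lt_or_ge j l with h | h
  · rw [binomialWeight_eq_zero_of_lt _ h, Nat.choose_eq_zero_of_lt h]
    simp
  · have h_sub : (1 - m / (m + 1) : ℝ) = (m + 1 : ℝ)⁻¹ := by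
      field_simp
      ring
    rw [binomialWeight_eq, h_sub, div_pow, inv_pow, ← Nat.sub_add_cancel h, pow_add,
      Nat.sub_add_cancel h]
    field_simp

lemma hw_le (y : Fin N → ZMod (m + 1)) : hw y ≤ N :=
  card_finset_fin_le _

lemma sum_binomialWeight_mul_sphereAvg (hm : m ≠ 0) (f : (Fin N → ZMod (m + 1)) → ℝ)
    (x : Fin N → ZMod (m + 1)) {j : ℕ} (hj : j ≤ N) :
    ∑ l ∈ range (N + 1), binomialWeight (m / (m + 1)) j l * sphereAvg f x l =
      𝔼 π : Equiv.Perm (Fin N), cosetAvg (resampleSubgroup m π j) f x := by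
  have h_maps (y : Fin N → ZMod (m + 1)) (_ : y ∈ univ) : hw y ∈ range (N + 1) :=
    mem_range_succ_iff.mpr (hw_le y)
  rw [expect_cosetAvg_resampleSubgroup f x hj, ← sum_fiberwise_of_maps_to h_maps]
  refine sum_congr rfl fun l _ => ?_
  rw [sphereAvg, expect_eq_sum_div_card, card_sphere, binomialWeight_div_add_one, sum_div, mul_sum]
  refine sum_congr rfl fun y hy => ?_
  rw [(mem_filter.mp hy).2]
  push_cast
  field_simp

/-- The permutation average of the martingale maximal functions along the chains of subgroups that
resample ever fewer coordinates, in the order given by the permutation. -/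
def resampleMax (f : (Fin N → ZMod (m + 1)) → ℝ) (x : Fin N → ZMod (m + 1)) : ℝ :=
  𝔼 π : Equiv.Perm (Fin N), partialSups (fun i => cosetAvg (resampleSubgroup m π (N - i)) f) N x

lemma sum_binomialWeight_mul_sphereAvg_le_resampleMax (hm : m ≠ 0)
    (f : (Fin N → ZMod (m + 1)) → ℝ) (x : Fin N → ZMod (m + 1)) {j : ℕ} (hj : j ≤ N) :
    ∑ l ∈ range (N + 1), binomialWeight (m / (m + 1)) j l * sphereAvg f x l ≤ resampleMax f x := by
  rw [sum_binomialWeight_mul_sphereAvg hm f x hj]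
  refine expect_le_expect fun π _ => ?_
  have h := le_partialSups_of_le (fun i => cosetAvg (resampleSubgroup m π (N - i)) f)
    (N.sub_le j) x
  rwa [Nat.sub_sub_self hj] at h

lemma resampleMax_nonneg {f : (Fin N → ZMod (m + 1)) → ℝ} (hf : ∀ x, 0 ≤ f x)
    (x : Fin N → ZMod (m + 1)) : 0 ≤ resampleMax f x :=
  expect_nonneg fun _ _ => partialSups_cosetAvg_nonneg _ hf N x

lemma sum_resampleMax_rpow_le {f : (Fin N → ZMod (m + 1)) → ℝ} (hf : ∀ x, 0 ≤ f x) {p : ℝ}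
    (hp : 1 < p) : ∑ x, resampleMax f x ^ p ≤ (p / (p - 1)) ^ p * ∑ x, f x ^ p := by
  calc ∑ x, resampleMax f x ^ p
      ≤ ∑ x, 𝔼 π : Equiv.Perm (Fin N),
          partialSups (fun i => cosetAvg (resampleSubgroup m π (N - i)) f) N x ^ p :=
        sum_le_sum fun x _ => rpow_expect_le_expect_rpow univ hp.le fun π _ =>
          partialSups_cosetAvg_nonneg _ hf N x
    _ ≤ (p / (p - 1)) ^ p * ∑ x, f x ^ p := by
        rw [← expect_sum_comm]
        exact expect_le univ_nonempty fun π _ => sum_partialSups_cosetAvg_rpow_le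
          (fun i j hij => resampleSubgroup_mono m π (Nat.sub_le_sub_left hij N)) hf hp N

end Resampling

/-! ### The smoothing remainder of the spherical averages -/

section Remainder

variable {m N : ℕ}

/-- The `M`-fold window difference of the radius sequence of the spherical averages of `f`,
evaluated at the radius `n`. -/
def sphereWindowDiff (w M n : ℕ) (f : (Fin N → ZMod (m + 1)) → ℂ) (x : Fin N → ZMod (m + 1)) : ℂ :=
  (windowDiff ℂ w ^ M) (sphereAvg f x) n

lemma sphereWindowDiff_add (w M n : ℕ) (f g : (Fin N → ZMod (m + 1)) → ℂ)
    (x : Fin N → ZMod (m + 1)) :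
    sphereWindowDiff w M n (f + g) x = sphereWindowDiff w M n f x + sphereWindowDiff w M n g x := by
  have h_add : sphereAvg (f + g) x = sphereAvg f x + sphereAvg g x :=
    funext fun k => expect_add_distrib _ (fun y => f (x - y)) fun y => g (x - y)
  rw [sphereWindowDiff, h_add, map_add]
  rfl

lemma sum_norm_sphereWindowDiff_le {w : ℕ} (hw : 0 < w) (M n : ℕ)
    (f : (Fin N → ZMod (m + 1)) → ℂ) :
    ∑ x, ‖sphereWindowDiff w M n f x‖ ≤ 2 ^ M * ∑ x, ‖f x‖ :=
  sum_norm_windowDiff_pow_le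
    (fun l => by simpa only [Real.rpow_one] using sum_norm_sphereAvg_rpow_le f l le_rfl) hw M n

lemma sum_sphereWindowDiff_mul_addChar (w M n : ℕ) (f : (Fin N → ZMod (m + 1)) → ℂ)
    (ψ : AddChar (Fin N → ZMod (m + 1)) ℂ) :
    ∑ x, sphereWindowDiff w M n f x * ψ x =
      (windowDiff ℂ w ^ M) (fun l => 𝔼 y ∈ sphere m N l, ψ y) n * ∑ x, f x * ψ x := by
  have h_transform : ∑ x, ψ x • sphereAvg f x =
      (∑ x, f x * ψ x) • fun l => 𝔼 y ∈ sphere m N l, ψ y := by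
    ext l
    simp only [Finset.sum_apply, Pi.smul_apply, smul_eq_mul, mul_comm (ψ _)]
    rw [mul_comm]
    exact sum_expect_translate_mul_addChar (sphere m N l) f ψ
  have h_linear := congrFun (congrArg (windowDiff ℂ w ^ M) h_transform) n
  simp only [map_sum, map_smul, Finset.sum_apply, Pi.smul_apply, smul_eq_mul] at h_linear
  rw [mul_comm, ← h_linear]
  exact sum_congr rfl fun x _ => mul_comm _ _

lemma sum_norm_sq_sphereWindowDiff_le (hm : 2 ≤ m) {w M n : ℕ} (hw : 0 < w) (hn : 0 < n)
    (hN : n + 2 * M * w + M ≤ N) (f : (Fin N → ZMod (m + 1)) → ℂ) :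
    ∑ x, ‖sphereWindowDiff w M n f x‖ ^ 2 ≤
      ((2 * w) ^ M * (M.factorial * ((m + 1) / n) ^ M)) ^ 2 * ∑ x, ‖f x‖ ^ 2 := by
  refine sum_norm_sq_le_of_norm_sum_mul_addChar_le fun ψ => ?_
  rw [sum_sphereWindowDiff_mul_addChar, norm_mul]
  refine mul_le_mul_of_nonneg_right ?_ (norm_nonneg _)
  refine norm_windowDiff_pow_le hw fun i hi => ?_
  refine (norm_fwdDiff_expect_sphere_addChar_le hm ψ (by lia) (by lia)).trans ?_
  gcongr
  lia

/-- The smoothing width at radius `k`: the least `w` with `2 * k < w ^ 2`. It exceeds the standard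
deviation of the binomial distributions with mean at most `k`. -/
def smoothingWidth (k : ℕ) : ℕ :=
  Nat.sqrt (2 * k) + 1

lemma smoothingWidth_pos (k : ℕ) : 0 < smoothingWidth k :=
  Nat.succ_pos _

lemma two_mul_le_smoothingWidth_sq (k : ℕ) : 2 * k ≤ smoothingWidth k ^ 2 :=
  (Nat.lt_succ_sqrt' (2 * k)).le

lemma smoothingWidth_sq_le {k : ℕ} (hk : 0 < k) : smoothingWidth k ^ 2 ≤ 8 * k := by
  have h_sq : Nat.sqrt (2 * k) ^ 2 ≤ 2 * k := Nat.sqrt_le' _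
  have h_pos : 0 < Nat.sqrt (2 * k) := Nat.sqrt_pos.mpr (by lia)
  rw [smoothingWidth]
  nlinarith

lemma four_mul_smoothingWidth_le {M k : ℕ} (hk : 0 < k) (hMk : 128 * M ^ 2 ≤ k) :
    4 * M * smoothingWidth k ≤ k := by
  rw [← Nat.pow_le_pow_iff_left two_ne_zero]
  calc (4 * M * smoothingWidth k) ^ 2 = 16 * M ^ 2 * smoothingWidth k ^ 2 := by ring
    _ ≤ 16 * M ^ 2 * (8 * k) := Nat.mul_le_mul_left _ (smoothingWidth_sq_le hk)
    _ = 128 * M ^ 2 * k := by ring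
    _ ≤ k ^ 2 := by
      rw [sq k]
      exact Nat.mul_le_mul_right k hMk

/-- The error of replacing the spherical average of `f` at radius `k` by a combination of averages
over windows of `smoothingWidth k` smaller radii: the `M`-fold window difference that ends at
radius `k`. The subtraction is meant for `2 * M * smoothingWidth k ≤ k`. -/
def sphereRemainder (M k : ℕ) (f : (Fin N → ZMod (m + 1)) → ℂ) (x : Fin N → ZMod (m + 1)) : ℂ :=
  sphereWindowDiff (smoothingWidth k) M (k - 2 * M * smoothingWidth k) f x

lemma sum_norm_sq_sphereRemainder_le (hm : 2 ≤ m) {M k : ℕ} (hk : 0 < k)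
    (hMk : 128 * M ^ 2 ≤ k) (hkN : k + M ≤ N) (f : (Fin N → ZMod (m + 1)) → ℂ) :
    ∑ x, ‖sphereRemainder M k f x‖ ^ 2 ≤
      M.factorial ^ 2 * (128 * (m + 1) ^ 2 / k) ^ M * ∑ x, ‖f x‖ ^ 2 := by
  unfold sphereRemainder
  have h_half := four_mul_smoothingWidth_le hk hMk
  have hw_pos := smoothingWidth_pos k
  have hw_sq : (smoothingWidth k : ℝ) ^ 2 ≤ 8 * k := by exact_mod_cast smoothingWidth_sq_le hk
  generalize smoothingWidth k = w at *
  obtain ⟨n, hn⟩ : ∃ n, n = k - 2 * M * w := ⟨_, rfl⟩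
  rw [← hn]
  have hk' : (0 : ℝ) < k := by exact_mod_cast hk
  have hn_ge : (k : ℝ) / 2 ≤ n := by
    rw [div_le_iff₀ two_pos]
    exact_mod_cast (by lia : k ≤ n * 2)
  have h_base : (2 * w * ((m + 1) / n) : ℝ) ^ 2 ≤ 128 * (m + 1) ^ 2 / k := by
    calc (2 * w * ((m + 1) / n) : ℝ) ^ 2 = (4 : ℝ) * w ^ 2 * ((m + 1) / n) ^ 2 := by ring
      _ ≤ (4 : ℝ) * (8 * k) * ((m + 1) / (k / 2)) ^ 2 := by gcongr
      _ = (128 : ℝ) * (m + 1) ^ 2 / k := by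
        field_simp
        ring
  refine (sum_norm_sq_sphereWindowDiff_le hm hw_pos (by lia : 0 < n) (by lia) f).trans
    (mul_le_mul_of_nonneg_right ?_ (by positivity))
  calc ((2 * w) ^ M * (M.factorial * ((m + 1) / n) ^ M) : ℝ) ^ 2
      = (M.factorial : ℝ) ^ 2 * ((2 * w * ((m + 1) / n)) ^ 2) ^ M := by
        rw [pow_right_comm, mul_pow _ ((m + 1) / n : ℝ) M]
        ring
    _ ≤ (M.factorial : ℝ) ^ 2 * (128 * (m + 1) ^ 2 / k) ^ M := by gcongr

lemma exists_sum_norm_sphereRemainder_rpow_le (hm : 2 ≤ m) {p : ℝ} (hp : 1 < p) (hp_two : p < 2)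
    {M : ℕ} (hM : 2 ≤ M * (p - 1)) :
    ∃ K : ℝ, 0 ≤ K ∧ ∀ {N k : ℕ}, 0 < k → 128 * M ^ 2 ≤ k → k + M ≤ N →
      ∀ f : (Fin N → ZMod (m + 1)) → ℂ,
        ∑ x, ‖sphereRemainder M k f x‖ ^ p ≤
          K * ((k : ℝ) ^ 2)⁻¹ * ∑ x, ‖f x‖ ^ p := by
  have hp_sub : 0 < p - 1 := by linarith
  have hp_two_sub : 0 < 2 - p := by linarith
  set A : ℝ := 2 * 2 ^ M * p / (p - 1) + 4 * p / (2 - p) with hA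
  set D : ℝ := M.factorial ^ 2 * (128 * (m + 1) ^ 2) ^ M with hD
  have hA_nonneg : 0 ≤ A := by positivity
  have hD_nonneg : 0 ≤ D := by positivity
  refine ⟨A * D ^ (p - 1), by positivity, fun {N k} hk hMk hkN f => ?_⟩
  have hk' : (1 : ℝ) ≤ k := by exact_mod_cast hk
  have h_interp := sum_norm_rpow_le_of_l1_of_l2 hp hp_two
    (E := M.factorial ^ 2 * (128 * (m + 1) ^ 2 / k) ^ M) (by positivity)
    (fun f g y => (sphereWindowDiff_add _ _ _ f g y).symm ▸ norm_add_le _ _)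
    (sum_norm_sphereWindowDiff_le (smoothingWidth_pos k) M _)
    (sum_norm_sq_sphereRemainder_le hm hk hMk hkN) f
  refine h_interp.trans (mul_le_mul_of_nonneg_right ?_ (by positivity))
  rw [← hA, mul_assoc A]
  refine mul_le_mul_of_nonneg_left ?_ hA_nonneg
  calc (M.factorial ^ 2 * (128 * (m + 1) ^ 2 / k) ^ M : ℝ) ^ (p - 1)
      = D ^ (p - 1) * ((k : ℝ) ^ (M * (p - 1)))⁻¹ := by
        rw [div_pow, ← mul_div_assoc, ← hD, Real.div_rpow hD_nonneg (by positivity),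
          Real.rpow_mul (by positivity), Real.rpow_natCast, div_eq_mul_inv]
    _ ≤ D ^ (p - 1) * ((k : ℝ) ^ 2)⁻¹ := by
        gcongr
        exact_mod_cast Real.rpow_le_rpow_of_exponent_le hk' hM

lemma expect_norm_sphereAvg_window_le (hm : m ≠ 0) {u w : ℕ} (hw : 0 < w) (hwu : w ≤ u)
    (hu : 2 * (u + 2 * w) ≤ w ^ 2) (huN : (u + 2 * w) * (m + 1) ≤ m * N)
    (f : (Fin N → ZMod (m + 1)) → ℂ) (x : Fin N → ZMod (m + 1)) :
    𝔼 i ∈ range w, ‖sphereAvg f x (u + i)‖ ≤ 16 * resampleMax (fun y => ‖f y‖) x := by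
  have hm_one : (1 : ℝ) ≤ m := by exact_mod_cast Nat.one_le_iff_ne_zero.mpr hm
  have hθ_half : (1 / 2 : ℝ) ≤ m / (m + 1) := by
    rw [div_le_div_iff₀ two_pos (by positivity)]
    linarith
  have hθ_one : (m / (m + 1) : ℝ) ≤ 1 := div_le_one_of_le₀ (by linarith) (by positivity)
  have huN' : ((u + 2 * w : ℕ) : ℝ) ≤ m / (m + 1) * N := by
    rw [div_mul_eq_mul_div, le_div_iff₀ (by positivity)]
    exact_mod_cast huN
  calc 𝔼 i ∈ range w, ‖sphereAvg f x (u + i)‖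
      ≤ 𝔼 i ∈ range w, sphereAvg (fun y => ‖f y‖) x (u + i) :=
        expect_le_expect fun i _ => norm_sphereAvg_le f x (u + i)
    _ ≤ 16 * resampleMax (fun y => ‖f y‖) x :=
        expect_window_le_of_sum_binomialWeight_le hθ_half hθ_one hw hwu hu
          (by exact_mod_cast huN') (fun l => sphereAvg_nonneg (fun y => norm_nonneg (f y)) x l)
          fun j hj => sum_binomialWeight_mul_sphereAvg_le_resampleMax hm _ x hj

lemma norm_sphereAvg_le_resampleMax_add (hm : m ≠ 0) {M k : ℕ} (hk : 0 < k)
    (hMk : 128 * M ^ 2 ≤ k) (hkN : k * (m + 1) ≤ m * N) (f : (Fin N → ZMod (m + 1)) → ℂ)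
    (x : Fin N → ZMod (m + 1)) :
    ‖sphereAvg f x k‖ ≤ (2 ^ M - 1) * (16 * resampleMax (fun y => ‖f y‖) x) +
      ‖sphereRemainder M k f x‖ := by
  unfold sphereRemainder
  have h_half := four_mul_smoothingWidth_le hk hMk
  have hw_pos := smoothingWidth_pos k
  have hw_sq := two_mul_le_smoothingWidth_sq k
  generalize smoothingWidth k = w at *
  obtain ⟨n, hn⟩ : ∃ n, k = n + 2 * M * w := ⟨k - 2 * M * w, by lia⟩
  have h_window : ∀ s, s + 2 * w ≤ 2 * M * w →
      𝔼 j ∈ range w, ‖sphereAvg f x (n + s + j)‖ ≤ 16 * resampleMax (fun y => ‖f y‖) x :=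
    fun s hs => expect_norm_sphereAvg_window_le hm hw_pos (by lia) (by lia)
      ((Nat.mul_le_mul_right _ (by lia)).trans hkN) f x
  have h_smooth := norm_sub_windowDiff_pow_le hw_pos h_window
  have h_sub : k - 2 * M * w = n := by lia
  rw [h_sub, sphereWindowDiff, ← sub_le_iff_le_add]
  rw [← hn] at h_smooth
  exact (norm_sub_norm_le _ _).trans h_smooth

end Remainder

/-! ### The local maximal function -/

section LocalMax

variable {m N : ℕ}

lemma add_rpow_le_mul_rpow_add_rpow {a b p : ℝ} (ha : 0 ≤ a) (hb : 0 ≤ b) (hp : 1 ≤ p) :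
    (a + b) ^ p ≤ 2 ^ (p - 1) * (a ^ p + b ^ p) := by
  lift a to NNReal using ha
  lift b to NNReal using hb
  exact_mod_cast NNReal.rpow_add_le_mul_rpow_add_rpow a b hp

lemma exists_localMax_eq (f : (Fin N → ZMod (m + 1)) → ℂ) (x : Fin N → ZMod (m + 1)) :
    ∃ k ≤ m * N / (m + 1), localMax m N f x = ‖sphereAvg f x k‖ := by
  obtain ⟨k, hk, h_eq⟩ := exists_mem_eq_sup' (nonempty_range_add_one (n := m * N / (m + 1)))
    fun k => ‖convC (sigmaC m N (k : ℤ)) f x‖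
  rw [convC_sigmaC] at h_eq
  exact ⟨k, mem_range_succ_iff.mp hk, h_eq⟩

lemma norm_sphereAvg_le_localMax (f : (Fin N → ZMod (m + 1)) → ℂ) (x : Fin N → ZMod (m + 1))
    {k : ℕ} (hk : k ≤ m * N / (m + 1)) : ‖sphereAvg f x k‖ ≤ localMax m N f x := by
  rw [← convC_sigmaC]
  exact le_sup' (fun k : ℕ => ‖convC (sigmaC m N (k : ℤ)) f x‖) (mem_range_succ_iff.mpr hk)

lemma localMax_nonneg (f : (Fin N → ZMod (m + 1)) → ℂ) (x : Fin N → ZMod (m + 1)) :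
    0 ≤ localMax m N f x :=
  (norm_nonneg _).trans (norm_sphereAvg_le_localMax f x (Nat.zero_le _))

lemma localMax_rpow_le_localMax (f : (Fin N → ZMod (m + 1)) → ℂ) (x : Fin N → ZMod (m + 1))
    {t : ℝ} (ht : 1 ≤ t) :
    localMax m N f x ^ t ≤ localMax m N (fun y => ((‖f y‖ ^ t : ℝ) : ℂ)) x := by
  obtain ⟨k, hk, h_eq⟩ := exists_localMax_eq f x
  have h_cast : sphereAvg (fun y => ((‖f y‖ ^ t : ℝ) : ℂ)) x k =
      ((sphereAvg (fun y => ‖f y‖ ^ t) x k : ℝ) : ℂ) :=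
    (RCLike.ofReal_expect _ _).symm
  calc localMax m N f x ^ t ≤ sphereAvg (fun y => ‖f y‖ ^ t) x k :=
        h_eq ▸ norm_sphereAvg_rpow_le f x k ht
    _ ≤ ‖sphereAvg (fun y => ((‖f y‖ ^ t : ℝ) : ℂ)) x k‖ := by
        rw [h_cast, Complex.norm_real]
        exact le_abs_self _
    _ ≤ localMax m N (fun y => ((‖f y‖ ^ t : ℝ) : ℂ)) x := norm_sphereAvg_le_localMax _ x hk

lemma norm_sphereAvg_rpow_le_resampleMax_add (hm : m ≠ 0) {p : ℝ} (hp : 1 ≤ p) {M k : ℕ}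
    (hk : 0 < k) (hMk : 128 * M ^ 2 ≤ k) (hkN : k ≤ m * N / (m + 1))
    (f : (Fin N → ZMod (m + 1)) → ℂ) (x : Fin N → ZMod (m + 1)) :
    ‖sphereAvg f x k‖ ^ p ≤
      2 ^ (p - 1) * ((2 ^ M * 16) ^ p * resampleMax (fun y => ‖f y‖) x ^ p +
        ‖sphereRemainder M k f x‖ ^ p) := by
  have h_max : 0 ≤ resampleMax (fun y => ‖f y‖) x := resampleMax_nonneg (fun y => norm_nonneg _) x
  have h_bound : ‖sphereAvg f x k‖ ≤ 2 ^ M * 16 * resampleMax (fun y => ‖f y‖) x +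
      ‖sphereRemainder M k f x‖ := by
    have := norm_sphereAvg_le_resampleMax_add hm hk hMk
      ((Nat.le_div_iff_mul_le m.succ_pos).mp hkN) f x
    linarith
  rw [← Real.mul_rpow (by positivity) h_max]
  exact (Real.rpow_le_rpow (norm_nonneg _) h_bound (by linarith)).trans
    (add_rpow_le_mul_rpow_add_rpow (by positivity) (norm_nonneg _) hp)

lemma localMax_rpow_le (hm : m ≠ 0) {p : ℝ} (hp : 1 ≤ p) {M K : ℕ} (hMK : 128 * M ^ 2 ≤ K)
    (f : (Fin N → ZMod (m + 1)) → ℂ) (x : Fin N → ZMod (m + 1)) :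
    localMax m N f x ^ p ≤ ∑ k ∈ range (K + 1), ‖sphereAvg f x k‖ ^ p +
      2 ^ (p - 1) * ((2 ^ M * 16) ^ p * resampleMax (fun y => ‖f y‖) x ^ p +
        ∑ k ∈ Ioo K (m * N / (m + 1) + 1),
          ‖sphereRemainder M k f x‖ ^ p) := by
  obtain ⟨k, hk, h_eq⟩ := exists_localMax_eq f x
  have h_max : 0 ≤ resampleMax (fun y => ‖f y‖) x := resampleMax_nonneg (fun y => norm_nonneg _) x
  rw [h_eq]
  rcases lt_or_ge K k with hKk | hkK
  · refine le_add_of_nonneg_of_le (sum_nonneg fun _ _ => by positivity) ?_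
    have h_avg := norm_sphereAvg_rpow_le_resampleMax_add hm hp (by lia) (hMK.trans hKk.le) hk f x
    refine h_avg.trans ?_
    gcongr
    exact single_le_sum (f := fun k => ‖sphereRemainder M k f x‖ ^ p) (fun _ _ => by positivity)
      (mem_Ioo.mpr ⟨hKk, Nat.lt_succ_of_le hk⟩)
  · refine le_add_of_le_of_nonneg ?_ (by positivity)
    exact single_le_sum (f := fun k => ‖sphereAvg f x k‖ ^ p) (fun _ _ => by positivity)
      (mem_range_succ_iff.mpr hkK)

lemma exists_sum_sum_norm_sphereRemainder_rpow_le (hm : 2 ≤ m) {p : ℝ} (hp : 1 < p)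
    (hp_two : p < 2) {M : ℕ} (hM : 2 ≤ M * (p - 1)) :
    ∃ K : ℝ, 0 ≤ K ∧ ∀ (N : ℕ) (f : (Fin N → ZMod (m + 1)) → ℂ),
      ∑ k ∈ Ioo (128 * M ^ 2 + m * M) (m * N / (m + 1) + 1),
        ∑ x, ‖sphereRemainder M k f x‖ ^ p ≤
          K * ∑ x, ‖f x‖ ^ p := by
  obtain ⟨K, hK_nonneg, hK⟩ := exists_sum_norm_sphereRemainder_rpow_le hm hp hp_two hM
  refine ⟨K * 2, by positivity, fun N f => ?_⟩
  set k₀ := 128 * M ^ 2 + m * M with hk₀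
  have h_term : ∀ k ∈ Ioo k₀ (m * N / (m + 1) + 1),
      ∑ x, ‖sphereRemainder M k f x‖ ^ p ≤
        K * ((k : ℝ) ^ 2)⁻¹ * ∑ x, ‖f x‖ ^ p := by
    intro k hk
    obtain ⟨hk_gt, hk_lt⟩ := mem_Ioo.mp hk
    have hkN : k * (m + 1) ≤ m * N :=
      (Nat.le_div_iff_mul_le m.succ_pos).mp (Nat.le_of_lt_succ hk_lt)
    exact hK (by lia) (by lia) (by nlinarith) f
  have h_inv_sq : ∑ k ∈ Ioo k₀ (m * N / (m + 1) + 1), ((k : ℝ) ^ 2)⁻¹ ≤ 2 :=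
    (sum_Ioo_inv_sq_le k₀ _).trans (div_le_self zero_le_two (by linarith [k₀.cast_nonneg (α := ℝ)]))
  refine (sum_le_sum h_term).trans ?_
  rw [← sum_mul, ← mul_sum]
  gcongr

lemma exists_sum_localMax_rpow_le_of_lt_two (hm : 2 ≤ m) {p : ℝ} (hp : 1 < p) (hp_two : p < 2) :
    ∃ C : ℝ, 0 ≤ C ∧ ∀ (N : ℕ) (f : (Fin N → ZMod (m + 1)) → ℂ),
      ∑ x, localMax m N f x ^ p ≤ C * ∑ x, ‖f x‖ ^ p := by
  have hp_sub : 0 < p - 1 := by linarith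
  obtain ⟨M, hM⟩ : ∃ M : ℕ, 2 ≤ M * (p - 1) :=
    ⟨⌈2 / (p - 1)⌉₊, (div_le_iff₀ hp_sub).mp (Nat.le_ceil _)⟩
  obtain ⟨R, hR_nonneg, hR⟩ := exists_sum_sum_norm_sphereRemainder_rpow_le hm hp hp_two hM
  refine ⟨(128 * M ^ 2 + m * M + 1 : ℕ) +
    2 ^ (p - 1) * ((2 ^ M * 16) ^ p * (p / (p - 1)) ^ p + R), by positivity, fun N f => ?_⟩
  have h_small : ∑ x, ∑ k ∈ range (128 * M ^ 2 + m * M + 1), ‖sphereAvg f x k‖ ^ p ≤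
      (128 * M ^ 2 + m * M + 1 : ℕ) * ∑ x, ‖f x‖ ^ p := by
    rw [sum_comm, ← nsmul_eq_mul]
    simpa only [card_range] using sum_le_card_nsmul (range (128 * M ^ 2 + m * M + 1)) _ _
      fun k _ => sum_norm_sphereAvg_rpow_le f k hp.le
  have h_resample := sum_resampleMax_rpow_le (fun x => norm_nonneg (f x)) hp
  have h_remainder := hR N f
  rw [sum_comm] at h_remainder
  refine (sum_le_sum fun x _ => localMax_rpow_le (by lia) hp.le
    (Nat.le_add_right (128 * M ^ 2) (m * M)) f x).trans ?_
  rw [sum_add_distrib, ← mul_sum, sum_add_distrib, ← mul_sum, add_mul, mul_assoc (2 ^ (p - 1)),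
    add_mul, mul_assoc (_ ^ p)]
  gcongr

lemma exists_sum_localMax_rpow_le (hm : 2 ≤ m) {p : ℝ} (hp : 1 < p) :
    ∃ C : ℝ, 0 ≤ C ∧ ∀ (N : ℕ) (f : (Fin N → ZMod (m + 1)) → ℂ),
      ∑ x, localMax m N f x ^ p ≤ C * ∑ x, ‖f x‖ ^ p := by
  obtain ⟨q, hq_one, hq_two, hqp⟩ : ∃ q : ℝ, 1 < q ∧ q < 2 ∧ q ≤ p :=
    ⟨min p (3 / 2), lt_min hp (by norm_num), (min_le_right _ _).trans_lt (by norm_num),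
      min_le_left _ _⟩
  have hq_pos : 0 < q := by linarith
  have h_exp : p / q * q = p := div_mul_cancel₀ p hq_pos.ne'
  obtain ⟨C, hC_nonneg, hC⟩ := exists_sum_localMax_rpow_le_of_lt_two hm hq_one hq_two
  refine ⟨C, hC_nonneg, fun N f => ?_⟩
  calc ∑ x, localMax m N f x ^ p = ∑ x, (localMax m N f x ^ (p / q)) ^ q := by
        simp_rw [← Real.rpow_mul (localMax_nonneg f _), h_exp]
    _ ≤ ∑ x, localMax m N (fun y => ((‖f y‖ ^ (p / q) : ℝ) : ℂ)) x ^ q :=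
        sum_le_sum fun x _ => Real.rpow_le_rpow (Real.rpow_nonneg (localMax_nonneg f x) _)
          (localMax_rpow_le_localMax f x ((one_le_div hq_pos).mpr hqp)) hq_pos.le
    _ ≤ C * ∑ x, ‖((‖f x‖ ^ (p / q) : ℝ) : ℂ)‖ ^ q := hC N _
    _ = C * ∑ x, ‖f x‖ ^ p := by
        simp_rw [Complex.norm_real, Real.norm_rpow_of_nonneg (norm_nonneg _), norm_norm,
          ← Real.rpow_mul (norm_nonneg _), h_exp]

end LocalMax

theorem statement11 (m : ℕ) (hm : 2 ≤ m) (p : ℝ) (hp : 1 < p) :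
    ∃ C : ℝ, ∀ N : ℕ, 1 ≤ N → ∀ f : (Fin N → ZMod (m + 1)) → ℂ,
      (∑ x, localMax m N f x ^ p) ^ (1 / p) ≤ C * (∑ x, ‖f x‖ ^ p) ^ (1 / p) := by
  obtain ⟨C, hC_nonneg, hC⟩ := exists_sum_localMax_rpow_le hm hp
  refine ⟨C ^ (1 / p), fun N _ f => ?_⟩
  rw [← Real.mul_rpow hC_nonneg (sum_nonneg fun x _ => Real.rpow_nonneg (norm_nonneg _) p)]
  exact Real.rpow_le_rpow (sum_nonneg fun x _ => Real.rpow_nonneg (localMax_nonneg f x) p)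
    (hC N f) (by positivity)
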